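/- arXiv:1206.2765 — 3 statements merged into one kernel-verified Lean document; each statement's English description precedes it below -/
import Mathlib

section
/- For nonzero integers i, j, k, the word a^{-i} b^j a^i b^k in the free group F(a,b) is not a proper power; i.e., there is no word S in F(a,b) and integer n > 1 with a^{-i} b^j a^i b^k = S^n as reduced words. -/
def innAut (G : Type*) [Group G] : Subgroup (MulAut G) := (MulAut.conj : G →* MulAut G).range

instance innAut_normal (G : Type*) [Group G] : (innAut G).Normal := by
  constructor
  rintro x ⟨g, rfl⟩ f
  refine ⟨f g, ?_⟩
  ext h
  simp [MulAut.conj_apply, MulAut.mul_apply, mul_assoc]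

abbrev Out (G : Type*) [Group G] := MulAut G ⧸ innAut G

def ResiduallyFinite (G : Type*) [Group G] : Prop :=
  ∀ g : G, g ≠ 1 → ∃ N : Subgroup G, N.Normal ∧ Finite (G ⧸ N) ∧ g ∉ N

noncomputable def expSum (i : Fin 2) : FreeGroup (Fin 2) →* Multiplicative ℤ :=
  FreeGroup.lift (fun j => Multiplicative.ofAdd (if j = i then (1 : ℤ) else 0))

noncomputable def σ (i : Fin 2) (w : FreeGroup (Fin 2)) : ℤ :=
  Multiplicative.toAdd (expSum i w)

def NielsenEquiv {G : Type*} [Group G] {n : ℕ} (Y Z : Fin n → G) : Prop :=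
  ∃ φ : FreeGroup (Fin n) ≃* FreeGroup (Fin n),
    ∀ i, FreeGroup.lift Y (φ (FreeGroup.of i)) = Z i

def SameTSystem {G : Type*} [Group G] {n : ℕ} (Y Z : Fin n → G) : Prop :=
  ∃ ψ : G ≃* G, NielsenEquiv (fun i => ψ (Y i)) Z

/-!
The reduced word of a power `Sⁿ` has the form `C Rⁿ C⁻¹`. If it is cyclically reduced then `C` is
empty, so it is literally a repetition `Rⁿ`. If `A ++ B = Rⁿ` with `n ≥ 2`, then `R` is a prefix of
`A`, or `A` is a prefix of `R` and `B` contains the second copy of `R`; so one of `A` and `B`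
contains every letter of `A ++ B`. For `A = a⁻ⁱ bʲ` and `B = aⁱ bᵏ` this fails: the two powers of
`a` are spelled with opposite letters.
-/

section FreeGroupWords

open FreeGroup

variable {α : Type*}

/-- An element of a monoid is a proper power if it is an `n`-th power for some natural `n > 1`.
In a group, negative exponents are covered by replacing `s` with its inverse. -/
def IsProperPower {M : Type*} [Monoid M] (g : M) : Prop :=
  ∃ (s : M) (n : ℕ), 1 < n ∧ g = s ^ n

theorem exists_eq_flatten_replicate_of_mk_eq_pow {L : List (α × Bool)}
    (hL : IsCyclicallyReduced L) {S : FreeGroup α} {n : ℕ} (h : mk L = S ^ n) :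
    ∃ R : List (α × Bool), L = (List.replicate n R).flatten := by
  classical
  have hreduce : L = reduce (List.replicate n S.toWord).flatten := by
    rw [← hL.isReduced.reduce_eq, ← toWord_mk, h, toWord_pow]
  rcases eq_or_ne n 0 with rfl | hn
  · exact ⟨[], by simpa using hreduce⟩
  have hword : L = reduceCyclically.conjugator S.toWord ++
      (List.replicate n (reduceCyclically S.toWord)).flatten ++
      invRev (reduceCyclically.conjugator S.toWord) := by
    rw [hreduce, reduceCyclically.reduce_flatten_replicate isReduced_toWord, if_neg hn]
  cases hc : reduceCyclically.conjugator S.toWord with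
  | nil => exact ⟨reduceCyclically S.toWord, by simpa [hc] using hword⟩
  | cons p c =>
    have hcancel : L = p :: (c ++ (List.replicate n (reduceCyclically S.toWord)).flatten ++
        invRev c) ++ [(p.1, !p.2)] := by
      simpa [hc, invRev] using hword
    rw [hcancel, isCyclicallyReduced_cons_append_iff] at hL
    exact absurd (hL.2 rfl) (by simp)

theorem not_isProperPower_mk_append {A B : List (α × Bool)} {p q : α × Bool}
    (h : IsCyclicallyReduced (A ++ B)) (hpA : p ∉ A) (hpB : p ∈ B) (hqA : q ∈ A) (hqB : q ∉ B) :
    ¬ IsProperPower (mk (A ++ B)) := by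
  rintro ⟨S, n, hn, hS⟩
  obtain ⟨R, hR⟩ := exists_eq_flatten_replicate_of_mk_eq_pow h hS
  have hmem {r : α × Bool} (hr : r ∈ A ++ B) : r ∈ R := by
    obtain ⟨R', hR', hr⟩ := List.mem_flatten.1 (hR ▸ hr)
    exact List.eq_of_mem_replicate hR' ▸ hr
  obtain ⟨m, rfl⟩ := Nat.exists_eq_add_of_lt hn
  have hsplit : A ++ B = R ++ (R ++ (List.replicate m R).flatten) := by
    rw [hR, show 1 + m + 1 = m + 1 + 1 by lia]
    simp only [List.replicate_succ, List.flatten_cons]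
  rcases List.append_eq_append_iff.1 hsplit with ⟨C, -, rfl⟩ | ⟨C, rfl, -⟩
  · have hqR : q ∈ R := hmem (List.mem_append_left _ hqA)
    exact hqB (List.mem_append_right _ (List.mem_append_left _ hqR))
  · have hpR : p ∈ R := hmem (List.mem_append_right _ hpB)
    exact hpA (List.mem_append_left _ hpR)

/-- The letter that is repeated when the power `x ^ z`, encoded as the pair `(x, z)` with `z ≠ 0`,
is spelled out as a word. For `z = 0` it is the inverse letter of `x`, by convention. -/
def syllableLetter (b : α × ℤ) : α × Bool :=
  (b.1, decide (0 < b.2))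

theorem syllableLetter_neg {x : α} {z : ℤ} (hz : z ≠ 0) :
    syllableLetter (x, -z) = (x, !(syllableLetter (x, z)).2) := by
  have hsign : 0 < -z ↔ ¬ 0 < z := by lia
  simp only [syllableLetter, hsign, decide_not]

/-- The word spelling a product of syllables `x₁ ^ z₁ * ⋯ * xₘ ^ zₘ`, given as the list of pairs
`(xᵢ, zᵢ)`, letter by letter and without cancellation. A syllable with exponent `0` contributes
nothing. -/
def syllableWord (l : List (α × ℤ)) : List (α × Bool) :=
  l.flatMap fun b => List.replicate b.2.natAbs (syllableLetter b)

theorem of_zpow_eq_mk_replicate (x : α) (z : ℤ) :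
    of x ^ z = mk (List.replicate z.natAbs (syllableLetter (x, z))) := by
  have hpow (m : ℕ) : of x ^ m = mk (List.replicate m (x, true)) := by
    classical
    rw [← toWord_of_pow, mk_toWord]
  rw [syllableLetter]
  obtain ⟨m, rfl | rfl⟩ := z.eq_nat_or_neg
  · rcases m.eq_zero_or_pos with rfl | hm
    · simp [one_eq_mk]
    · simp [hpow, hm]
  · have hm : ¬ 0 < -(m : ℤ) := by lia
    rw [zpow_neg, zpow_natCast, hpow, inv_mk, decide_eq_false hm]
    simp [invRev]

theorem mk_syllableWord (l : List (α × ℤ)) :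
    mk (syllableWord l) = (l.map fun b => of b.1 ^ b.2).prod := by
  induction l with
  | nil => rfl
  | cons b l ih =>
    rw [List.map_cons, List.prod_cons, ← ih, of_zpow_eq_mk_replicate, mul_mk]
    rfl

theorem syllableWord_append (l₁ l₂ : List (α × ℤ)) :
    syllableWord (l₁ ++ l₂) = syllableWord l₁ ++ syllableWord l₂ :=
  List.flatMap_append

theorem mem_syllableWord {l : List (α × ℤ)} {p : α × Bool} :
    p ∈ syllableWord l ↔ ∃ b ∈ l, b.2 ≠ 0 ∧ p = syllableLetter b := by
  simp only [syllableWord, List.mem_flatMap, List.mem_replicate, Int.natAbs_ne_zero]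

theorem head?_syllableWord {l : List (α × ℤ)} (hl : ∀ b ∈ l, b.2 ≠ 0) :
    (syllableWord l).head? = (l.map syllableLetter).head? := by
  cases l with
  | nil => rfl
  | cons b l =>
    have hb : b.2 ≠ 0 := hl b List.mem_cons_self
    simp [syllableWord, List.head?_append, List.head?_replicate, hb]

theorem getLast?_syllableWord {l : List (α × ℤ)} (hl : ∀ b ∈ l, b.2 ≠ 0) :
    (syllableWord l).getLast? = (l.map syllableLetter).getLast? := by
  induction l using List.reverseRecOn with
  | nil => rfl
  | append_singleton l b =>
    have hb : b.2 ≠ 0 := hl b (by simp)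
    simp [syllableWord, List.getLast?_append, List.getLast?_replicate, hb]

theorem isReduced_syllableWord {l : List (α × ℤ)} (hl : ∀ b ∈ l, b.2 ≠ 0)
    (h : FreeGroup.IsReduced (l.map syllableLetter)) : FreeGroup.IsReduced (syllableWord l) := by
  induction l with
  | nil => exact FreeGroup.IsReduced.nil
  | cons b l ih =>
    have hl' : ∀ c ∈ l, c.2 ≠ 0 := fun c hc => hl c (List.mem_cons_of_mem _ hc)
    rw [List.map_cons, FreeGroup.IsReduced, List.isChain_cons] at h
    refine List.IsChain.append (List.isChain_replicate_of_rel _ fun _ => rfl) (ih hl' h.2) ?_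
    intro p hp q hq
    obtain ⟨-, rfl⟩ := List.mem_replicate.1 (List.mem_of_getLast? hp)
    exact h.1 q (head?_syllableWord hl' ▸ hq)

theorem isCyclicallyReduced_syllableWord {l : List (α × ℤ)} (hl : ∀ b ∈ l, b.2 ≠ 0)
    (h : IsCyclicallyReduced (l.map syllableLetter)) :
    IsCyclicallyReduced (syllableWord l) := by
  refine ⟨isReduced_syllableWord hl h.isReduced, ?_⟩
  rw [getLast?_syllableWord hl, head?_syllableWord hl]
  exact h.2

theorem statement_0_general {x y : α} (hxy : x ≠ y) {i j k : ℤ} (hi : i ≠ 0) (hj : j ≠ 0)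
    (hk : k ≠ 0) : ¬ IsProperPower (of x ^ (-i) * of y ^ j * of x ^ i * of y ^ k) := by
  have hword : of x ^ (-i) * of y ^ j * of x ^ i * of y ^ k =
      mk (syllableWord [(x, -i), (y, j)] ++ syllableWord [(x, i), (y, k)]) := by
    simp [← syllableWord_append, mk_syllableWord, mul_assoc]
  have hcyc : IsCyclicallyReduced
      (syllableWord [(x, -i), (y, j)] ++ syllableWord [(x, i), (y, k)]) := by
    rw [← syllableWord_append]
    apply isCyclicallyReduced_syllableWord
    · simp [hi, hj, hk]
    · simp [isCyclicallyReduced_iff, FreeGroup.IsReduced, syllableLetter, hxy, hxy.symm]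
  have hneg : syllableLetter (x, i) ≠ syllableLetter (x, -i) := by
    rw [syllableLetter_neg hi]
    simp [syllableLetter]
  have hgen (z w : ℤ) : syllableLetter (x, z) ≠ syllableLetter (y, w) := by
    simp [syllableLetter, hxy]
  rw [hword]
  apply not_isProperPower_mk_append (p := syllableLetter (x, i)) (q := syllableLetter (x, -i)) hcyc
    <;> simp [mem_syllableWord, hi, hneg, hneg.symm, hgen]

end FreeGroupWords

theorem statement_0 (i j k : ℤ) (hi : i ≠ 0) (hj : j ≠ 0) (hk : k ≠ 0) :
    ¬ ∃ (S : FreeGroup (Fin 2)) (n : ℕ), 1 < n ∧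
      (FreeGroup.of (0 : Fin 2)) ^ (-i) * (FreeGroup.of (1 : Fin 2)) ^ j *
        (FreeGroup.of (0 : Fin 2)) ^ i * (FreeGroup.of (1 : Fin 2)) ^ k = S ^ n :=
  statement_0_general (by decide) hi hj hk
end

section
/- Let G = ⟨a, b; r⟩ with σ_a(R) = 0 for all R ∈ r and r not contained in F(a,b)′. If ψ is a tame automorphism of G (i.e., (aψ, bψ) is Nielsen equivalent to (a,b)), then there exist signs ε₀, ε₁ ∈ {±1}, an integer k, and an inner automorphism γ of G such that aψγ = a^{ε₀} b^k and bψγ = b^{ε₁} in G. -/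
/-!
Lift `ψ` to an automorphism of the free group on `a` and `b`. Up to conjugation, the Nielsen moves
that carry the basis `(a, b)` to its image never need to mix signs: the image is, up to order,
inverses and conjugation, a pair of positive words in `a^±1` and `b^±1` grown by multiplying one
word by the other. A relator outside the derived subgroup makes `b` torsion in `G^ab`, so the
`a`-exponent sum of the lift of `ψ(b)` vanishes; positivity then leaves no occurrence of `a` in that
word, and only the moves that multiply the first word by `b` can have been used.

That every basis of the free group is reached by Nielsen moves is the classical reduction argument:
a pair of least total length, with conjugation allowed, is already Nielsen reduced, so the
generators themselves occur in it.
-/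

theorem NielsenEquiv.symm {G : Type*} [Group G] {n : ℕ} {Y Z : Fin n → G}
    (h : NielsenEquiv Y Z) : NielsenEquiv Z Y := by
  obtain ⟨φ, hφ⟩ := h
  have hlift : (FreeGroup.lift Y).comp φ.toMonoidHom = FreeGroup.lift Z := by
    ext i
    simpa using hφ i
  refine ⟨φ.symm, fun i => ?_⟩
  simp [← hlift]

namespace NielsenReduction

section CommonPrefix

variable {β : Type*} [DecidableEq β]

/-- The longest common prefix of two lists, the overlap of two reduced words. -/
def commonPrefix : List β → List β → List β
  | a :: l, b :: m => if a = b then a :: commonPrefix l m else []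
  | _, _ => []

theorem exists_eq_commonPrefix_append : ∀ l m : List β, ∃ l' m',
    l = commonPrefix l m ++ l' ∧ m = commonPrefix l m ++ m' ∧
      ∀ a ∈ l'.head?, ∀ b ∈ m'.head?, a ≠ b
  | [], m => ⟨[], m, by simp [commonPrefix]⟩
  | a :: l, [] => ⟨a :: l, [], by simp [commonPrefix]⟩
  | a :: l, b :: m => by
    by_cases hab : a = b
    · obtain ⟨l', m', hl, hm, hne⟩ := exists_eq_commonPrefix_append l m
      exact ⟨l', m', by simpa [commonPrefix, hab] using hl, by simpa [commonPrefix, hab] using hm,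
        hne⟩
    · exact ⟨a :: l, b :: m, by simp [commonPrefix, hab]⟩

theorem min_length_commonPrefix_le : ∀ l m n : List β,
    min (commonPrefix l n).length (commonPrefix n m).length ≤ (commonPrefix l m).length
  | [], _, _ => by simp [commonPrefix]
  | _ :: _, [], n => by cases n <;> simp [commonPrefix]
  | _ :: _, _ :: _, [] => by simp [commonPrefix]
  | _ :: l, _ :: m, _ :: n => by
    have ih := min_length_commonPrefix_le l m n
    grind [commonPrefix]

end CommonPrefix

section Overlap

open FreeGroup

variable {α : Type*}

theorem isReduced_invRev_append {l m : List (α × Bool)} (hl : IsReduced l) (hm : IsReduced m)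
    (hne : ∀ a ∈ l.head?, ∀ b ∈ m.head?, a ≠ b) : IsReduced (invRev l ++ m) := by
  refine List.isChain_append.2 ⟨?_, hm, ?_⟩
  · rw [invRev, List.isChain_reverse, List.isChain_map]
    exact List.IsChain.imp (fun a b h h' => by simp [h h'.symm]) hl
  · rw [invRev, List.getLast?_reverse, List.head?_map]
    rintro _ ha b hb hab
    obtain ⟨a, ha', rfl⟩ := Option.mem_map.1 ha
    exact Bool.not_eq.2 fun h => hne a ha' b hb (Prod.ext hab h)

variable [DecidableEq α]

theorem norm_mk_of_isReduced {l : List (α × Bool)} (hl : IsReduced l) :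
    norm (mk l) = l.length := by
  rw [FreeGroup.norm, toWord_mk, hl.reduce_eq]

theorem norm_pow_succ (g : FreeGroup α) (n : ℕ) :
    norm (g ^ (n + 1)) = norm g + n * (reduceCyclically g.toWord).length := by
  have hg := congrArg List.length (reduceCyclically.conj_conjugator_reduceCyclically g.toWord)
  have hpow := congrArg List.length
    (reduceCyclically.reduce_flatten_replicate_succ (isReduced_toWord (x := g)) n)
  rw [← toWord_pow] at hpow
  simp only [List.length_append, invRev_length, List.length_flatten, List.map_replicate,
    List.sum_replicate, smul_eq_mul] at hg hpow
  rw [FreeGroup.norm, FreeGroup.norm, hpow, ← hg]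
  ring

theorem norm_lt_norm_mul_self {g : FreeGroup α} (hg : g ≠ 1) : norm g < norm (g * g) := by
  have hne : reduceCyclically g.toWord ≠ [] := by
    intro h
    have hconj := reduceCyclically.conj_conjugator_reduceCyclically g.toWord
    rw [h, List.append_nil] at hconj
    exact hg (by rw [← mk_toWord (x := g), ← hconj, ← mul_mk, ← inv_mk, mul_inv_cancel])
  have hpos := List.length_pos_iff.2 hne
  have hsq := norm_pow_succ g 1
  rw [one_add_one_eq_two, sq] at hsq
  omega

/-- The length of the longest common prefix of the reduced words of `g` and `h`, that is, the
Gromov product of `g` and `h` based at `1` in the Cayley tree. In particular `overlap x⁻¹ y` is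
the number of letters of `y` cancelled in the product `x * y`. -/
def overlap (g h : FreeGroup α) : ℕ :=
  (commonPrefix g.toWord h.toWord).length

theorem exists_norm_eq_overlap (g h : FreeGroup α) : ∃ p : FreeGroup α,
    norm p = overlap g h ∧ norm (p⁻¹ * g) + norm p = norm g ∧
      norm (p⁻¹ * h) + norm p = norm h ∧ norm (g⁻¹ * h) = norm (p⁻¹ * g) + norm (p⁻¹ * h) := by
  obtain ⟨l, m, hl, hm, hne⟩ := exists_eq_commonPrefix_append g.toWord h.toWord
  rw [overlap, FreeGroup.norm, FreeGroup.norm]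
  set p := commonPrefix g.toWord h.toWord
  have hpl : IsReduced (p ++ l) := hl ▸ isReduced_toWord
  have hpm : IsReduced (p ++ m) := hm ▸ isReduced_toWord
  have hp : IsReduced p := hpl.infix (List.prefix_append p l).isInfix
  have hlr : IsReduced l := hpl.infix (List.suffix_append p l).isInfix
  have hmr : IsReduced m := hpm.infix (List.suffix_append p m).isInfix
  have hg : (mk p)⁻¹ * g = mk l := by
    rw [inv_mul_eq_iff_eq_mul, mul_mk, ← hl, mk_toWord]
  have hh : (mk p)⁻¹ * h = mk m := by
    rw [inv_mul_eq_iff_eq_mul, mul_mk, ← hm, mk_toWord]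
  have hgh : g⁻¹ * h = mk (invRev l ++ m) := by
    rw [← mul_mk, ← inv_mk, ← hg, ← hh]
    group
  refine ⟨mk p, norm_mk_of_isReduced hp, ?_, ?_, ?_⟩
  · rw [hg, norm_mk_of_isReduced hlr, norm_mk_of_isReduced hp, hl, List.length_append, add_comm]
  · rw [hh, norm_mk_of_isReduced hmr, norm_mk_of_isReduced hp, hm, List.length_append, add_comm]
  · rw [hgh, hg, hh, norm_mk_of_isReduced (isReduced_invRev_append hlr hmr hne),
      norm_mk_of_isReduced hlr, norm_mk_of_isReduced hmr, List.length_append, invRev_length]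

theorem norm_inv_mul_add_overlap (g h : FreeGroup α) :
    norm (g⁻¹ * h) + 2 * overlap g h = norm g + norm h := by
  obtain ⟨p, hp, hg, hh, hgh⟩ := exists_norm_eq_overlap g h
  omega

theorem norm_mul_add_overlap (g h : FreeGroup α) :
    norm (g * h) + 2 * overlap g⁻¹ h = norm g + norm h := by
  simpa using norm_inv_mul_add_overlap g⁻¹ h

theorem overlap_comm (g h : FreeGroup α) : overlap g h = overlap h g := by
  have hgh := norm_inv_mul_add_overlap g h
  have hhg := norm_inv_mul_add_overlap h g
  rw [← norm_inv_eq (x := h⁻¹ * g), mul_inv_rev, inv_inv] at hhg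
  omega

theorem min_overlap_le (g h k : FreeGroup α) :
    min (overlap g k) (overlap k h) ≤ overlap g h :=
  min_length_commonPrefix_le _ _ _

theorem overlap_mul_add_overlap_inv (g h : FreeGroup α) :
    overlap g (g * h) + overlap g⁻¹ h = norm g := by
  have hgh := norm_mul_add_overlap g h
  have hggh := norm_inv_mul_add_overlap g (g * h)
  rw [inv_mul_cancel_left] at hggh
  omega

theorem two_mul_overlap_inv_lt_norm {g : FreeGroup α} (hg : g ≠ 1) :
    2 * overlap g⁻¹ g < norm g := by
  have hsq := norm_mul_add_overlap g g
  have hlt := norm_lt_norm_mul_self hg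
  omega

/-- The hypothesis `hp` says that `p` is a prefix of `g`, and `hq` that `q` is a suffix. -/
theorem norm_inv_mul_mul_inv_le {g p q : FreeGroup α} (hp : norm (p⁻¹ * g) + norm p ≤ norm g)
    (hq : norm (g * q⁻¹) + norm q ≤ norm g) (hpq : norm p + norm q ≤ norm g) :
    norm (p⁻¹ * g * q⁻¹) + norm p + norm q ≤ norm g := by
  have hg := norm_mul_add_overlap g q⁻¹
  have hpg := norm_mul_add_overlap (p⁻¹ * g) g⁻¹
  have hpgq := norm_mul_add_overlap (p⁻¹ * g) q⁻¹
  have hmin := min_overlap_le (p⁻¹ * g)⁻¹ q⁻¹ g⁻¹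
  rw [mul_inv_cancel_right] at hpg
  simp only [norm_inv_eq] at hg hpg hpgq
  omega

end Overlap

section ReducedSets

open FreeGroup

theorem exists_isChain_of_mem_closure {G : Type*} [Group G] {S : Set G}
    (hS : ∀ x ∈ S, x⁻¹ ∈ S) {g : G} (hg : g ∈ Subgroup.closure S) :
    ∃ l : List G, (∀ x ∈ l, x ∈ S) ∧ l.IsChain (fun x y => x * y ≠ 1) ∧ l.prod = g := by
  have mul_mem_left : ∀ x ∈ S, ∀ l : List G, (∀ x ∈ l, x ∈ S) → l.IsChain (fun x y => x * y ≠ 1) →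
      ∃ l' : List G, (∀ x ∈ l', x ∈ S) ∧ l'.IsChain (fun x y => x * y ≠ 1) ∧
        l'.prod = x * l.prod := by
    rintro x hx (_ | ⟨y, l⟩) hl hc
    · exact ⟨[x], by simpa using hx, by simp, by simp⟩
    by_cases hxy : x * y = 1
    · exact ⟨l, fun z hz => hl z (List.mem_cons_of_mem y hz), hc.tail, by
        rw [List.prod_cons, ← mul_assoc, hxy, one_mul]⟩
    · exact ⟨x :: y :: l, List.forall_mem_cons.2 ⟨hx, hl⟩, hc.cons_cons hxy, List.prod_cons⟩
  induction hg using Subgroup.closure_induction_left with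
  | one => exact ⟨[], by simp, by simp, rfl⟩
  | mul_left x hx y _ ih =>
    obtain ⟨l, hl, hc, rfl⟩ := ih
    exact mul_mem_left x hx l hl hc
  | inv_mul_cancel x hx y _ ih =>
    obtain ⟨l, hl, hc, rfl⟩ := ih
    exact mul_mem_left x⁻¹ (hS x hx) l hl hc

variable {α : Type*} [DecidableEq α]

theorem exists_eq_of_or_eq_inv_of_norm_eq_one {g : FreeGroup α} (hg : norm g = 1) :
    ∃ i, g = of i ∨ g = (of i)⁻¹ := by
  obtain ⟨⟨i, b⟩, hword⟩ := List.length_eq_one_iff.1 hg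
  refine ⟨i, ?_⟩
  rw [← mk_toWord (x := g), hword]
  cases b
  · exact .inr (by rw [of, inv_mk]; rfl)
  · exact .inl rfl

/-- A symmetric set of elements of a free group is Nielsen reduced if at most half of each factor
is cancelled in a nontrivial product of two of its elements, and no factor is cancelled entirely
between two neighbours. -/
structure IsNielsenReduced (S : Set (FreeGroup α)) : Prop where
  inv_mem : ∀ x ∈ S, x⁻¹ ∈ S
  norm_le_norm_mul : ∀ x ∈ S, ∀ y ∈ S, x * y ≠ 1 → norm x ≤ norm (x * y)
  overlap_add_overlap_lt : ∀ x ∈ S, ∀ y ∈ S, ∀ z ∈ S, x * y ≠ 1 → y * z ≠ 1 →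
    overlap x⁻¹ y + overlap y⁻¹ z < norm y

namespace IsNielsenReduced

variable {S : Set (FreeGroup α)} {x y : FreeGroup α} {l : List (FreeGroup α)}

theorem two_mul_overlap_le_right (hS : IsNielsenReduced S) (hx : x ∈ S) (hy : y ∈ S)
    (hxy : x * y ≠ 1) : 2 * overlap x⁻¹ y ≤ norm y := by
  have hle := hS.norm_le_norm_mul x hx y hy hxy
  have hnorm := norm_mul_add_overlap x y
  omega

theorem two_mul_overlap_le_left (hS : IsNielsenReduced S) (hx : x ∈ S) (hy : y ∈ S)
    (hxy : x * y ≠ 1) : 2 * overlap x⁻¹ y ≤ norm x := by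
  have hyx : y⁻¹ * x⁻¹ ≠ 1 := by rwa [← mul_inv_rev, Ne, inv_eq_one]
  have hle := hS.two_mul_overlap_le_right (hS.inv_mem y hy) (hS.inv_mem x hx) hyx
  rwa [inv_inv, norm_inv_eq, overlap_comm] at hle

theorem overlap_inv_prod_le (hS : IsNielsenReduced S) (hl : ∀ z ∈ x :: y :: l, z ∈ S)
    (hc : (x :: y :: l).IsChain (fun x y => x * y ≠ 1)) :
    overlap x⁻¹ (y :: l).prod ≤ overlap x⁻¹ y := by
  induction l generalizing x y with
  | nil => rw [List.prod_singleton]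
  | cons z l ih =>
    simp only [List.forall_mem_cons] at hl
    obtain ⟨hx, hy, hz, hl⟩ := hl
    obtain ⟨hxy, hc⟩ := List.isChain_cons_cons.1 hc
    have hyz := (List.isChain_cons_cons.1 hc).1
    have ih := ih (by simpa using ⟨hy, hz, hl⟩) hc
    have hlt := hS.overlap_add_overlap_lt x hx y hy z hz hxy hyz
    have hadd := overlap_mul_add_overlap_inv y (z :: l).prod
    have hmin := min_overlap_le x⁻¹ y (y * (z :: l).prod)
    rw [overlap_comm (y * _)] at hmin
    rw [List.prod_cons]
    omega

theorem norm_le_norm_prod (hS : IsNielsenReduced S) (hl : ∀ z ∈ l, z ∈ S)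
    (hc : l.IsChain (fun x y => x * y ≠ 1)) : ∀ z ∈ l, norm z ≤ norm l.prod := by
  induction l with
  | nil => simp
  | cons x l ih =>
    rcases l with _ | ⟨y, l⟩
    · simp
    have ih := ih (List.forall_mem_cons.1 hl).2 hc.tail
    have hoverlap := hS.overlap_inv_prod_le hl hc
    have hx : x ∈ S := hl x (by simp)
    have hy : y ∈ S := hl y (by simp)
    have hxy := (List.isChain_cons_cons.1 hc).1
    have hright := hS.two_mul_overlap_le_right hx hy hxy
    have hleft := hS.two_mul_overlap_le_left hx hy hxy
    have hnorm := norm_mul_add_overlap x (y :: l).prod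
    have hy_le := ih y List.mem_cons_self
    rw [List.prod_cons]
    refine List.forall_mem_cons.2 ⟨by omega, fun z hz => ?_⟩
    have hz_le := ih z hz
    omega

theorem mem_closure_norm_le (hS : IsNielsenReduced S) {g : FreeGroup α}
    (hg : g ∈ Subgroup.closure S) : g ∈ Subgroup.closure {x ∈ S | norm x ≤ norm g} := by
  obtain ⟨l, hl, hc, rfl⟩ := exists_isChain_of_mem_closure hS.inv_mem hg
  exact Subgroup.list_prod_mem _ fun x hx =>
    Subgroup.subset_closure ⟨hl x hx, hS.norm_le_norm_prod hl hc x hx⟩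

theorem of_mem_of_closure_eq_top (hS : IsNielsenReduced S)
    (hgen : Subgroup.closure S = ⊤) (i : α) : of i ∈ S := by
  by_contra hi
  let f : FreeGroup α →* Multiplicative ℤ := FreeGroup.lift fun j => .ofAdd (if j = i then 1 else 0)
  have hker : {x ∈ S | norm x ≤ norm (of i)} ⊆ f.ker := by
    rintro x ⟨hx, hnorm⟩
    rw [norm_of] at hnorm
    rcases Nat.le_one_iff_eq_zero_or_eq_one.1 hnorm with hzero | hone
    · rw [norm_eq_zero.1 hzero]
      exact one_mem _
    · obtain ⟨j, hj⟩ := exists_eq_of_or_eq_inv_of_norm_eq_one hone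
      have hji : j ≠ i := by
        rintro rfl
        rcases hj with rfl | rfl
        · exact hi hx
        · exact hi (by simpa using hS.inv_mem _ hx)
      rcases hj with rfl | rfl <;> simp [f, hji]
  have hmem := (Subgroup.closure_le _).2 hker
    (hS.mem_closure_norm_le (hgen ▸ Subgroup.mem_top (of i)))
  simp [f] at hmem

end IsNielsenReduced

end ReducedSets

section NielsenMoves

variable {G : Type*} [Group G] {u v x y : G}

/-- `NielsenReachable u v x y` means that the pair `(x, y)` arises from `(u, v)` by elementary
Nielsen moves and simultaneous conjugations. -/
inductive NielsenReachable (u v : G) : G → G → Prop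
  | refl : NielsenReachable u v u v
  | swap {x y : G} : NielsenReachable u v x y → NielsenReachable u v y x
  | inv_left {x y : G} : NielsenReachable u v x y → NielsenReachable u v x⁻¹ y
  | mul_left {x y : G} : NielsenReachable u v x y → NielsenReachable u v (x * y) y
  | conj {x y : G} (g : G) : NielsenReachable u v x y →
      NielsenReachable u v (g * x * g⁻¹) (g * y * g⁻¹)

/-- The elements `u`, `v` and their inverses: the letters of the words in `u` and `v`. -/
def letters (u v : G) : Set G := {u, u⁻¹, v, v⁻¹}

theorem inv_mem_letters (hx : x ∈ letters u v) : x⁻¹ ∈ letters u v := by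
  rcases hx with rfl | rfl | rfl | rfl <;> simp [letters]

theorem letters_swap (u v : G) : letters v u = letters u v := by
  ext x
  simp only [letters, Set.mem_insert_iff, Set.mem_singleton_iff]
  tauto

theorem letters_inv_left (u v : G) : letters u⁻¹ v = letters u v := by
  rw [letters, inv_inv, Set.insert_comm, letters]

namespace NielsenReachable

theorem inv_right (h : NielsenReachable u v x y) : NielsenReachable u v x y⁻¹ :=
  h.swap.inv_left.swap

theorem mul_inv_left (h : NielsenReachable u v x y) : NielsenReachable u v (x * y⁻¹) y := by
  simpa using h.inv_right.mul_left.inv_right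

theorem trans {z w : G} (h : NielsenReachable u v x y) (h' : NielsenReachable x y z w) :
    NielsenReachable u v z w := by
  induction h' with
  | refl => exact h
  | swap _ ih => exact ih.swap
  | inv_left _ ih => exact ih.inv_left
  | mul_left _ ih => exact ih.mul_left
  | conj g _ ih => exact ih.conj g

theorem symm (h : NielsenReachable u v x y) : NielsenReachable x y u v := by
  induction h with
  | refl => exact refl
  | swap _ ih => exact refl.swap.trans ih
  | @inv_left x y _ ih =>
    have hback : NielsenReachable x⁻¹ y x y := by
      simpa using (refl (u := x⁻¹) (v := y)).inv_left
    exact hback.trans ih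
  | @mul_left x y _ ih =>
    have hback : NielsenReachable (x * y) y x y := by
      simpa using (refl (u := x * y) (v := y)).mul_inv_left
    exact hback.trans ih
  | @conj x y g _ ih =>
    have hback : NielsenReachable (g * x * g⁻¹) (g * y * g⁻¹) x y := by
      convert (refl (u := g * x * g⁻¹) (v := g * y * g⁻¹)).conj g⁻¹ using 1 <;> group
    exact hback.trans ih

theorem closure_eq_top (h : NielsenReachable u v x y) (huv : Subgroup.closure {u, v} = ⊤) :
    Subgroup.closure {x, y} = ⊤ := by
  have eq_top_of_mem {z w z' w' : G} (hzw : Subgroup.closure {z, w} = ⊤)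
      (hz : z ∈ Subgroup.closure {z', w'}) (hw : w ∈ Subgroup.closure {z', w'}) :
      Subgroup.closure {z', w'} = ⊤ := by
    rw [eq_top_iff, ← hzw, Subgroup.closure_le]
    exact Set.pair_subset hz hw
  induction h with
  | refl => exact huv
  | swap _ ih => rwa [Set.pair_comm]
  | @inv_left x y _ ih =>
    have hx : x⁻¹ ∈ Subgroup.closure {x⁻¹, y} := Subgroup.mem_closure_of_mem (by simp)
    exact eq_top_of_mem ih (inv_mem_iff.1 hx) (Subgroup.mem_closure_of_mem (by simp))
  | @mul_left x y _ ih =>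
    have hy : y ∈ Subgroup.closure {x * y, y} := Subgroup.mem_closure_of_mem (by simp)
    have hxy : x * y ∈ Subgroup.closure {x * y, y} := Subgroup.mem_closure_of_mem (by simp)
    exact eq_top_of_mem ih ((mul_mem_cancel_right hy).1 hxy) hy
  | conj g _ ih =>
    have hmap := congrArg (Subgroup.map (MulAut.conj g).toMonoidHom) ih
    rw [MonoidHom.map_closure, Set.image_pair,
      Subgroup.map_top_of_surjective _ (MulAut.conj g).surjective] at hmap
    exact hmap

end NielsenReachable

end NielsenMoves

section ShortestPairs

open FreeGroup

variable {α : Type*} [DecidableEq α] {u v x y : FreeGroup α}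

theorem exists_nielsenReachable_of_mem_letters (hx : x ∈ letters u v) : ∃ y,
    NielsenReachable u v x y ∧ norm x + norm y = norm u + norm v ∧ letters x y = letters u v := by
  rcases hx with rfl | rfl | rfl | rfl
  · exact ⟨v, .refl, rfl, rfl⟩
  · exact ⟨v, .inv_left .refl, by rw [norm_inv_eq], letters_inv_left u v⟩
  · exact ⟨u, .swap .refl, add_comm _ _, letters_swap u x⟩
  · exact ⟨u, .inv_left (.swap .refl), by rw [norm_inv_eq, add_comm],
      (letters_inv_left v u).trans (letters_swap u v)⟩

theorem nielsenReachable_of_mem_letters (hx : x ∈ letters u v) (hy : y ∈ letters u v)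
    (hne : y ≠ x) (hne_inv : y ≠ x⁻¹) :
    NielsenReachable u v x y ∧ norm x + norm y = norm u + norm v ∧ letters x y = letters u v := by
  obtain ⟨w, hreach, hnorm, hletters⟩ := exists_nielsenReachable_of_mem_letters hx
  rw [← hletters] at hy
  rcases hy with rfl | rfl | rfl | rfl
  · exact absurd rfl hne
  · exact absurd rfl hne_inv
  · exact ⟨hreach, hnorm, hletters⟩
  · refine ⟨hreach.inv_right, by rw [norm_inv_eq, hnorm], ?_⟩
    rw [← letters_swap, letters_inv_left, letters_swap, hletters]

/-- The pair `(u, v)` has the smallest total length among all pairs reachable from it. -/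
def IsShortest (u v : FreeGroup α) : Prop :=
  ∀ x y, NielsenReachable u v x y → norm u + norm v ≤ norm x + norm y

theorem exists_isShortest (u v : FreeGroup α) :
    ∃ x y, NielsenReachable u v x y ∧ IsShortest x y := by
  obtain ⟨⟨x, y⟩, hxy, hmin⟩ := (measure fun p : FreeGroup α × FreeGroup α =>
    norm p.1 + norm p.2).wf.has_min {p | NielsenReachable u v p.1 p.2} ⟨(u, v), .refl⟩
  exact ⟨x, y, hxy, fun z w hzw => not_lt.1 (hmin (z, w) (hxy.trans hzw))⟩

namespace IsShortest

theorem of_norm_eq (h : IsShortest u v) (hxy : NielsenReachable u v x y)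
    (hnorm : norm x + norm y = norm u + norm v) : IsShortest x y :=
  fun z w hzw => hnorm ▸ h z w (hxy.trans hzw)

theorem norm_le_norm_mul (h : IsShortest x y) : norm x ≤ norm (x * y) :=
  Nat.add_le_add_iff_right.1 (h _ _ (.mul_left .refl))

theorem swap (h : IsShortest x y) : IsShortest y x :=
  h.of_norm_eq (.swap .refl) (add_comm _ _)

theorem inv_left (h : IsShortest x y) : IsShortest x⁻¹ y :=
  h.of_norm_eq (.inv_left .refl) (by rw [norm_inv_eq])

theorem two_mul_overlap_le_right (h : IsShortest x y) : 2 * overlap x⁻¹ y ≤ norm y := by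
  have hle := h.norm_le_norm_mul
  have hnorm := norm_mul_add_overlap x y
  omega

theorem two_mul_overlap_le_left (h : IsShortest x y) : 2 * overlap x⁻¹ y ≤ norm x := by
  simpa [overlap_comm] using h.inv_left.swap.inv_left.two_mul_overlap_le_right

/-- If `y` were cancelled entirely in `x * y * x`, then `y = p * q` with both halves absorbed by
`x`, and conjugating `(x⁻¹ * y⁻¹, y)` by `p⁻¹` would give a shorter pair. -/
theorem overlap_add_overlap_lt_of_self (h : IsShortest x y) (hy : y ≠ 1) :
    overlap x⁻¹ y + overlap y⁻¹ x < norm y := by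
  by_contra! hle
  have hxy_right := h.two_mul_overlap_le_right
  have hxy_left := h.two_mul_overlap_le_left
  have hyx_left := h.swap.two_mul_overlap_le_left
  obtain ⟨p, hp, hpx, hpy, -⟩ := exists_norm_eq_overlap x⁻¹ y
  obtain ⟨q, rfl⟩ : ∃ q, y = p * q := ⟨p⁻¹ * y, by group⟩
  rw [inv_mul_cancel_left] at hpy
  have hqx : norm (x⁻¹ * q⁻¹) + norm q ≤ norm x⁻¹ := by
    have hpq := norm_inv_mul_add_overlap (p * q)⁻¹ q⁻¹
    have hxq := norm_inv_mul_add_overlap x q⁻¹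
    have hmin := min_overlap_le x q⁻¹ (p * q)⁻¹
    rw [overlap_comm x] at hmin
    rw [inv_inv, mul_inv_cancel_right] at hpq
    simp only [norm_inv_eq] at hpq hxq ⊢
    omega
  have hstrip := norm_inv_mul_mul_inv_le hpx.le hqx (by rw [norm_inv_eq]; omega)
  have hreach : NielsenReachable x (p * q) (p⁻¹ * x⁻¹ * q⁻¹) (q * p) := by
    convert NielsenReachable.refl.inv_left.mul_inv_left.conj p⁻¹ using 1 <;> group
  have hshort := h _ _ hreach
  have hqp := norm_mul_le q p
  have hpos := norm_eq_zero.not.2 hy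
  rw [norm_inv_eq] at hstrip
  omega

theorem overlap_add_overlap_lt (h : IsShortest x y) (hy : y ≠ 1) {z : FreeGroup α}
    (hz : z ∈ letters x y) (hyz : y * z ≠ 1) : overlap x⁻¹ y + overlap y⁻¹ z < norm y := by
  have hxy := h.two_mul_overlap_le_right
  have hyy := two_mul_overlap_inv_lt_norm hy
  rcases hz with rfl | rfl | rfl | rfl
  · exact h.overlap_add_overlap_lt_of_self hy
  · have hyx := h.inv_left.swap.two_mul_overlap_le_left
    have hmin := min_overlap_le y⁻¹ y x⁻¹
    omega
  · omega
  · exact absurd (mul_inv_cancel y) hyz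

theorem isNielsenReduced (h : IsShortest u v) : IsNielsenReduced (letters u v \ {1}) where
  inv_mem x hx := ⟨inv_mem_letters hx.1, by simpa using hx.2⟩
  norm_le_norm_mul := by
    rintro x ⟨hx, hx1⟩ y ⟨hy, -⟩ hxy
    by_cases hyx : y = x
    · exact hyx ▸ (norm_lt_norm_mul_self hx1).le
    · obtain ⟨hreach, hnorm, -⟩ :=
        nielsenReachable_of_mem_letters hx hy hyx fun h => hxy (h ▸ mul_inv_cancel x)
      exact (h.of_norm_eq hreach hnorm).norm_le_norm_mul
  overlap_add_overlap_lt := by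
    rintro x ⟨hx, -⟩ y ⟨hy, hy1⟩ z ⟨hz, -⟩ hxy hyz
    have hyy := two_mul_overlap_inv_lt_norm hy1
    have hx_ne : y ≠ x⁻¹ := fun h => hxy (h ▸ mul_inv_cancel x)
    have hz_ne : z ≠ y⁻¹ := fun h => hyz (h ▸ mul_inv_cancel y)
    by_cases hyx : y = x
    · subst hyx
      by_cases hzy : z = y
      · subst hzy
        omega
      · obtain ⟨hreach, hnorm, -⟩ := nielsenReachable_of_mem_letters hy hz hzy hz_ne
        have hle := (h.of_norm_eq hreach hnorm).two_mul_overlap_le_left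
        omega
    · obtain ⟨hreach, hnorm, hletters⟩ := nielsenReachable_of_mem_letters hx hy hyx hx_ne
      exact (h.of_norm_eq hreach hnorm).overlap_add_overlap_lt hy1 (hletters ▸ hz) hyz

end IsShortest

theorem nielsenReachable_of_closure_eq_top {u v : FreeGroup (Fin 2)}
    (h : Subgroup.closure {u, v} = ⊤) : NielsenReachable (of 0) (of 1) u v := by
  obtain ⟨x, y, hreach, hshort⟩ := exists_isShortest u v
  have hgen : Subgroup.closure (letters x y \ {1}) = ⊤ := by
    rw [Subgroup.closure_sdiff_one, eq_top_iff, ← hreach.closure_eq_top h]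
    exact Subgroup.closure_mono (by simp [letters, Set.insert_subset_iff])
  have hmem (i : Fin 2) : of i ∈ letters x y :=
    (hshort.isNielsenReduced.of_mem_of_closure_eq_top hgen i).1
  have hbasis := (nielsenReachable_of_mem_letters (hmem 0) (hmem 1) (by decide) (by decide)).1
  exact (hreach.trans hbasis).symm

end ShortestPairs

section StandardPairs

variable {G : Type*} [Group G] {a b u v x y : G}

/-- The pairs of positive words in `x` and `y` obtained from `(x, y)` by multiplying the first word
by the second on the right, or the second by the first on the left. -/
inductive PositivePair (x y : G) : G → G → Prop
  | base : PositivePair x y x y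
  | mul_left {u v : G} : PositivePair x y u v → PositivePair x y (u * v) v
  | mul_right {u v : G} : PositivePair x y u v → PositivePair x y u (v * u)

theorem PositivePair.swap (h : PositivePair x y u v) : PositivePair y x v u := by
  induction h with
  | base => exact base
  | mul_left _ ih => exact ih.mul_right
  | mul_right _ ih => exact ih.mul_left

/-- Up to order, inverses and conjugation, `(u, v)` is a positive pair in `a` or `a⁻¹` and `b` or
`b⁻¹`. -/
inductive StandardPair (a b : G) : G → G → Prop
  | positive {x y u v : G} : x = a ∨ x = a⁻¹ → y = b ∨ y = b⁻¹ → PositivePair x y u v →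
      StandardPair a b u v
  | swap {u v : G} : StandardPair a b u v → StandardPair a b v u
  | inv_left {u v : G} : StandardPair a b u v → StandardPair a b u⁻¹ v
  | conj {u v : G} (g : G) : StandardPair a b u v → StandardPair a b (g * u * g⁻¹) (g * v * g⁻¹)

namespace StandardPair

theorem inv_right (h : StandardPair a b u v) : StandardPair a b u v⁻¹ :=
  h.swap.inv_left.swap

theorem swap_generators (h : StandardPair a b u v) : StandardPair b a u v := by
  induction h with
  | positive hx hy h => exact (positive hy hx h.swap).swap
  | swap _ ih => exact ih.swap
  | inv_left _ ih => exact ih.inv_left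
  | conj g _ ih => exact ih.conj g

end StandardPair

theorem PositivePair.standardPair_inv_mul (hx : x = a ∨ x = a⁻¹) (hy : y = b ∨ y = b⁻¹)
    (h : PositivePair x y u v) : StandardPair a b (u⁻¹ * v) v := by
  cases h with
  | base => exact .positive (x := u⁻¹) (by rcases hx with rfl | rfl <;> simp) hy (.mul_left .base)
  | @mul_left w _ h =>
    convert (StandardPair.positive hx hy h).inv_left.conj v⁻¹ using 1 <;> group
  | @mul_right _ w h =>
    convert (StandardPair.positive hx hy h.mul_left).swap.conj u⁻¹ using 1 <;> group

namespace StandardPair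

theorem mul_and_inv_mul (h : StandardPair a b u v) :
    (StandardPair a b (u * v) v ∧ StandardPair a b (u⁻¹ * v) v) ∧
      StandardPair a b (v * u) u ∧ StandardPair a b (v⁻¹ * u) u := by
  induction h with
  | positive hx hy h =>
    exact ⟨⟨positive hx hy h.mul_left, h.standardPair_inv_mul hx hy⟩,
      (positive hx hy h.mul_right).swap, (h.swap.standardPair_inv_mul hy hx).swap_generators⟩
  | swap _ ih => exact ih.symm
  | @inv_left u v _ ih =>
    obtain ⟨⟨huv, huv'⟩, hvu, hvu'⟩ := ih
    refine ⟨⟨huv', by simpa using huv⟩, ?_, ?_⟩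
    · convert (hvu'.inv_left.conj u).inv_right using 1
      group
    · convert (hvu.inv_left.conj u).inv_right using 1 <;> group
  | conj g _ ih =>
    obtain ⟨⟨huv, huv'⟩, hvu, hvu'⟩ := ih
    refine ⟨⟨?_, ?_⟩, ?_, ?_⟩
    · convert huv.conj g using 1
      group
    · convert huv'.conj g using 1
      group
    · convert hvu.conj g using 1
      group
    · convert hvu'.conj g using 1
      group

theorem mul_left (h : StandardPair a b u v) : StandardPair a b (u * v) v :=
  h.mul_and_inv_mul.1.1

end StandardPair

theorem NielsenReachable.standardPair (h : NielsenReachable a b u v) : StandardPair a b u v := by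
  induction h with
  | refl => exact .positive (.inl rfl) (.inl rfl) .base
  | swap _ ih => exact ih.swap
  | inv_left _ ih => exact ih.inv_left
  | mul_left _ ih => exact ih.mul_left
  | conj g _ ih => exact ih.conj g

end StandardPairs

section TriangularPairs

variable {G : Type*} [Group G] {a b u v x y : G}

/-- Up to simultaneous conjugation, `u` is `a` or `a⁻¹` times a power of `b`, and `v` is `b` or
`b⁻¹`. -/
def IsTriangularPair (a b u v : G) : Prop :=
  ∃ (ε₀ ε₁ k : ℤ) (g : G), (ε₀ = 1 ∨ ε₀ = -1) ∧ (ε₁ = 1 ∨ ε₁ = -1) ∧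
    g⁻¹ * u * g = a ^ ε₀ * b ^ k ∧ g⁻¹ * v * g = b ^ ε₁

namespace IsTriangularPair

theorem inv_left (h : IsTriangularPair a b u v) : IsTriangularPair a b u⁻¹ v := by
  obtain ⟨ε₀, ε₁, k, g, hε₀, hε₁, hu, hv⟩ := h
  refine ⟨-ε₀, ε₁, -k, g * b ^ (-k), by omega, hε₁, ?_, ?_⟩
  · calc (g * b ^ (-k))⁻¹ * u⁻¹ * (g * b ^ (-k)) = b ^ k * (g⁻¹ * u * g)⁻¹ * b ^ (-k) := by group
      _ = a ^ (-ε₀) * b ^ (-k) := by rw [hu]; group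
  · calc (g * b ^ (-k))⁻¹ * v * (g * b ^ (-k)) = b ^ k * (g⁻¹ * v * g) * b ^ (-k) := by group
      _ = b ^ ε₁ := by rw [hv]; group

theorem inv_right (h : IsTriangularPair a b u v) : IsTriangularPair a b u v⁻¹ := by
  obtain ⟨ε₀, ε₁, k, g, hε₀, hε₁, hu, hv⟩ := h
  refine ⟨ε₀, -ε₁, k, g, hε₀, by omega, hu, ?_⟩
  rw [zpow_neg, ← hv]
  group

theorem conj (h : IsTriangularPair a b u v) (g : G) :
    IsTriangularPair a b (g * u * g⁻¹) (g * v * g⁻¹) := by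
  obtain ⟨ε₀, ε₁, k, c, hε₀, hε₁, hu, hv⟩ := h
  refine ⟨ε₀, ε₁, k, g * c, hε₀, hε₁, ?_, ?_⟩
  · rw [← hu]
    group
  · rw [← hv]
    group

theorem map {H : Type*} [Group H] (h : IsTriangularPair a b u v) (f : G →* H) :
    IsTriangularPair (f a) (f b) (f u) (f v) := by
  obtain ⟨ε₀, ε₁, k, g, hε₀, hε₁, hu, hv⟩ := h
  refine ⟨ε₀, ε₁, k, f g, hε₀, hε₁, ?_, ?_⟩
  · simpa using congrArg f hu
  · simpa using congrArg f hv

end IsTriangularPair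

theorem PositivePair.exists_map_eq_pow {H : Type*} [Group H] {f : G →* H}
    (h : PositivePair x y u v) (hy : f y = 1) :
    ∃ m n : ℕ, f u = f x ^ (m + 1) ∧ f v = f x ^ n ∧ (n = 0 → v = y ∧ ∃ k : ℤ, u = x * y ^ k) := by
  induction h with
  | base => exact ⟨0, 0, by simp, by simpa using hy, fun _ => ⟨rfl, 0, by simp⟩⟩
  | mul_left _ ih =>
    obtain ⟨m, n, hu, hv, hzero⟩ := ih
    refine ⟨m + n, n, by rw [map_mul, hu, hv, ← pow_add, add_right_comm], hv, fun hn => ?_⟩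
    obtain ⟨rfl, k, rfl⟩ := hzero hn
    exact ⟨rfl, k + 1, by rw [zpow_add_one, mul_assoc]⟩
  | mul_right _ ih =>
    obtain ⟨m, n, hu, hv, -⟩ := ih
    exact ⟨m, n + (m + 1), hu, by rw [map_mul, hu, hv, ← pow_add], by omega⟩

theorem isTriangularPair_mul_zpow (hx : x = a ∨ x = a⁻¹) (hy : y = b ∨ y = b⁻¹) (k : ℤ) :
    IsTriangularPair a b (x * y ^ k) y := by
  rcases hx with rfl | rfl <;> rcases hy with rfl | rfl
  · exact ⟨1, 1, k, 1, by simp⟩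
  · exact ⟨1, -1, -k, 1, by simp⟩
  · exact ⟨-1, 1, k, 1, by simp⟩
  · exact ⟨-1, -1, -k, 1, by simp⟩

theorem StandardPair.isTriangularPair {H : Type*} [Group H] {f : G →* H}
    (h : StandardPair a b u v) (ha : ¬IsOfFinOrder (f a)) (hb : f b = 1) (hv : f v = 1) :
    IsTriangularPair a b u v := by
  suffices (f v = 1 → IsTriangularPair a b u v) ∧ (f u = 1 → IsTriangularPair a b v u) from
    this.1 hv
  clear hv
  induction h with
  | @positive x y u v hx hy h =>
    have hfx : ¬IsOfFinOrder (f x) := by rcases hx with rfl | rfl <;> simpa using ha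
    have hfy : f y = 1 := by rcases hy with rfl | rfl <;> simpa using hb
    obtain ⟨m, n, hu, hv, hzero⟩ := h.exists_map_eq_pow hfy
    have eq_zero_of_pow_eq_one {k : ℕ} (hk : f x ^ k = 1) : k = 0 := by
      by_contra hne
      exact hfx (isOfFinOrder_iff_pow_eq_one.2 ⟨k, Nat.pos_of_ne_zero hne, hk⟩)
    constructor
    · intro hv1
      obtain ⟨rfl, k, rfl⟩ := hzero (eq_zero_of_pow_eq_one (hv ▸ hv1))
      exact isTriangularPair_mul_zpow hx hy k
    · intro hu1
      exact absurd (eq_zero_of_pow_eq_one (hu ▸ hu1)) m.succ_ne_zero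
  | swap _ ih => exact ih.symm
  | inv_left _ ih =>
    exact ⟨fun hv => (ih.1 hv).inv_left, fun hu => (ih.2 (by simpa using hu)).inv_right⟩
  | conj g _ ih =>
    exact ⟨fun hv => (ih.1 (by simpa using hv)).conj g, fun hu => (ih.2 (by simpa using hu)).conj g⟩

end TriangularPairs

section ExponentSums

open FreeGroup

theorem σ_mul (i : Fin 2) (u v : FreeGroup (Fin 2)) : σ i (u * v) = σ i u + σ i v := by
  simp [σ]

theorem σ_inv (i : Fin 2) (u : FreeGroup (Fin 2)) : σ i u⁻¹ = -σ i u := by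
  simp [σ]

theorem σ_of (i j : Fin 2) : σ i (of j) = if j = i then 1 else 0 := by
  simp [σ, expSum]

theorem map_eq_zpow_σ_mul_zpow_σ {A : Type*} [CommGroup A] (f : FreeGroup (Fin 2) →* A)
    (w : FreeGroup (Fin 2)) : f w = f (of 0) ^ σ 0 w * f (of 1) ^ σ 1 w := by
  induction w using FreeGroup.induction_on with
  | C1 => simp [σ]
  | of i => fin_cases i <;> simp [σ_of]
  | inv_of i ih => rw [_root_.map_inv, ih, σ_inv, σ_inv, zpow_neg, zpow_neg, mul_inv]
  | mul u v hu hv =>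
    rw [_root_.map_mul, hu, hv, σ_mul, σ_mul, zpow_add, zpow_add, mul_mul_mul_comm]

theorem mem_commutator_of_σ_eq_zero {w : FreeGroup (Fin 2)} (h0 : σ 0 w = 0) (h1 : σ 1 w = 0) :
    w ∈ commutator (FreeGroup (Fin 2)) := by
  rw [← Abelianization.ker_of, MonoidHom.mem_ker, map_eq_zpow_σ_mul_zpow_σ, h0, h1, zpow_zero,
    zpow_zero, one_mul]

theorem map_of_one_eq_one {rels : Set (FreeGroup (Fin 2))} {A : Type*} [CommGroup A]
    [IsMulTorsionFree A] (f : PresentedGroup rels →* A) {R : FreeGroup (Fin 2)} (hR : R ∈ rels)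
    (h0 : σ 0 R = 0) (h1 : σ 1 R ≠ 0) : f (PresentedGroup.of 1) = 1 := by
  have hrel := map_eq_zpow_σ_mul_zpow_σ (f.comp (PresentedGroup.mk rels)) R
  rw [MonoidHom.comp_apply, PresentedGroup.one_of_mem hR, _root_.map_one, h0, zpow_zero,
    one_mul] at hrel
  exact (IsMulTorsionFree.zpow_eq_one_iff_left h1).1 hrel.symm

/-- The exponent sum in the `i`-th generator, as a character of a group whose relators all have
exponent sum zero in that generator. -/
noncomputable def expSumCharacter (i : Fin 2) {rels : Set (FreeGroup (Fin 2))}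
    (h : ∀ R ∈ rels, σ i R = 0) : PresentedGroup rels →* Multiplicative ℤ :=
  QuotientGroup.lift _ (expSum i) <|
    Subgroup.normalClosure_le_normal fun R hR => congrArg Multiplicative.ofAdd (h R hR)

theorem expSumCharacter_mk (i : Fin 2) {rels : Set (FreeGroup (Fin 2))}
    (h : ∀ R ∈ rels, σ i R = 0) (w : FreeGroup (Fin 2)) :
    expSumCharacter i h (PresentedGroup.mk rels w) = expSum i w :=
  rfl

end ExponentSums

section NielsenEquivalence

theorem lift_presentedGroup_of {α : Type*} (rels : Set (FreeGroup α)) :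
    FreeGroup.lift (fun i => (PresentedGroup.of i : PresentedGroup rels)) =
      PresentedGroup.mk rels := by
  ext i
  simp [PresentedGroup.of]

theorem closure_pair_map_of_eq_top (θ : FreeGroup (Fin 2) ≃* FreeGroup (Fin 2)) :
    Subgroup.closure {θ (FreeGroup.of 0), θ (FreeGroup.of 1)} = ⊤ := by
  have hrange : Set.range FreeGroup.of = {FreeGroup.of (0 : Fin 2), FreeGroup.of 1} := by
    ext w
    simp [Fin.exists_fin_two, eq_comm]
  have hmap := θ.toMonoidHom.map_closure {FreeGroup.of 0, FreeGroup.of 1}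
  rw [← hrange, FreeGroup.closure_range_of, Subgroup.map_top_of_surjective _ θ.surjective, hrange,
    Set.image_pair] at hmap
  exact hmap.symm

end NielsenEquivalence

end NielsenReduction

open NielsenReduction in
theorem statement_6_general (rels : Set (FreeGroup (Fin 2)))
    (h0 : ∀ R ∈ rels, σ 0 R = 0)
    (hnd : ¬ rels ⊆ ↑(commutator (FreeGroup (Fin 2))))
    (ψ : PresentedGroup rels →* PresentedGroup rels)
    (htame : NielsenEquiv (fun i => ψ (PresentedGroup.of i))
      (fun i => (PresentedGroup.of i : PresentedGroup rels))) :
    IsTriangularPair (PresentedGroup.of 0) (PresentedGroup.of 1)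
      (ψ (PresentedGroup.of 0)) (ψ (PresentedGroup.of 1)) := by
  obtain ⟨R, hR, hσR⟩ : ∃ R ∈ rels, σ 1 R ≠ 0 := by
    by_contra! h1
    exact hnd fun R hR => mem_commutator_of_σ_eq_zero (h0 R hR) (h1 R hR)
  obtain ⟨θ, hθ⟩ := htame.symm
  simp only [lift_presentedGroup_of] at hθ
  have hθb : expSum 0 (θ (FreeGroup.of 1)) = 1 := by
    rw [← expSumCharacter_mk 0 h0, hθ]
    exact map_of_one_eq_one ((expSumCharacter 0 h0).comp ψ) hR (h0 R hR) hσR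
  have hpair := nielsenReachable_of_closure_eq_top (closure_pair_map_of_eq_top θ)
  have ha : ¬IsOfFinOrder (expSum 0 (FreeGroup.of 0)) :=
    not_isOfFinOrder_of_isMulTorsionFree (by simp [expSum])
  have hb : expSum 0 (FreeGroup.of 1) = 1 := by simp [expSum]
  have htri := hpair.standardPair.isTriangularPair ha hb hθb
  rw [← hθ, ← hθ]
  exact htri.map (PresentedGroup.mk rels)

theorem statement_6 (rels : Set (FreeGroup (Fin 2)))
    (h0 : ∀ R ∈ rels, σ 0 R = 0)
    (hnd : ¬ rels ⊆ ↑(commutator (FreeGroup (Fin 2))))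
    (ψ : MulAut (PresentedGroup rels))
    (htame : NielsenEquiv (fun i => ψ (PresentedGroup.of i))
      (fun i => (PresentedGroup.of i : PresentedGroup rels))) :
    ∃ (ε₀ ε₁ k : ℤ) (g : PresentedGroup rels),
      (ε₀ = 1 ∨ ε₀ = -1) ∧ (ε₁ = 1 ∨ ε₁ = -1) ∧
      g⁻¹ * ψ (PresentedGroup.of 0) * g =
        (PresentedGroup.of (0 : Fin 2) : PresentedGroup rels) ^ ε₀ *
          (PresentedGroup.of (1 : Fin 2) : PresentedGroup rels) ^ k ∧
      g⁻¹ * ψ (PresentedGroup.of 1) * g =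
        (PresentedGroup.of (1 : Fin 2) : PresentedGroup rels) ^ ε₁ :=
  statement_6_general rels h0 hnd ψ.toMonoidHom htame
end

section
/- Let G = ⟨a, b; Rⁿ⟩ with n > 1 and σ_a(R) = 0, R cyclically reduced. Then the centralizer of b in G is the cyclic subgroup generated by b: C_G(b) = ⟨b⟩. -/
/-- `w` is cyclically reduced: the last letter of its reduced word is not the
inverse of the first letter. -/
def CyclicallyReduced (w : FreeGroup (Fin 2)) : Prop :=
  ∀ x ∈ w.toWord.head?, ∀ y ∈ w.toWord.getLast?, x.1 = y.1 → x.2 = y.2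

namespace OneRelator

section MagnusSubgroup

variable {X P : Type*} [Group P] {S T : Set X}

/-- The Magnus subgroup on a set `S` of letters: the subgroup of the free group that they
generate. The letters to be avoided, as in the Freiheitssatz, are those outside `S`. -/
def magnusSubgroup (S : Set X) : Subgroup (FreeGroup X) :=
  Subgroup.closure (FreeGroup.of '' S)

lemma of_mem_magnusSubgroup {w : X} (hw : w ∈ S) : FreeGroup.of w ∈ magnusSubgroup S :=
  Subgroup.subset_closure (Set.mem_image_of_mem _ hw)

lemma magnusSubgroup_mono (h : S ⊆ T) : magnusSubgroup S ≤ magnusSubgroup T :=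
  Subgroup.closure_mono (Set.image_mono h)

lemma magnusSubgroup_singleton (w : X) :
    magnusSubgroup {w} = Subgroup.zpowers (FreeGroup.of w) := by
  rw [magnusSubgroup, Set.image_singleton, Subgroup.zpowers_eq_closure]

lemma map_eq_map_of_mem_magnusSubgroup {f g : FreeGroup X →* P}
    (h : ∀ w ∈ S, f (FreeGroup.of w) = g (FreeGroup.of w)) {y : FreeGroup X}
    (hy : y ∈ magnusSubgroup S) : f y = g y :=
  (Subgroup.closure_le (f.eqLocus g)).mpr (Set.forall_mem_image.mpr h) hy

lemma mk_cons (p : X × Bool) (L : List (X × Bool)) :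
    FreeGroup.mk (p :: L) = FreeGroup.mk [p] * FreeGroup.mk L := by
  rw [FreeGroup.mul_mk, List.singleton_append]

lemma mk_singleton_false (w : X) : FreeGroup.mk [(w, false)] = (FreeGroup.of w)⁻¹ := rfl

lemma mk_mem_magnusSubgroup {L : List (X × Bool)} (h : ∀ p ∈ L, p.1 ∈ S) :
    FreeGroup.mk L ∈ magnusSubgroup S := by
  induction L with
  | nil => exact one_mem _
  | cons p L ih =>
    obtain ⟨hp, hL⟩ := List.forall_mem_cons.mp h
    rw [mk_cons]
    refine mul_mem ?_ (ih hL)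
    obtain ⟨w, _ | _⟩ := p
    exacts [inv_mem (of_mem_magnusSubgroup hp), of_mem_magnusSubgroup hp]

lemma exists_mk_eq_of_mem_magnusSubgroup {y : FreeGroup X} (hy : y ∈ magnusSubgroup S) :
    ∃ L : List (X × Bool), (∀ p ∈ L, p.1 ∈ S) ∧ FreeGroup.mk L = y := by
  induction hy using Subgroup.closure_induction with
  | mem y h =>
    obtain ⟨w, hw, rfl⟩ := h
    exact ⟨[(w, true)], by simpa using hw, rfl⟩
  | one => exact ⟨[], by simp, rfl⟩
  | mul a b _ _ iha ihb =>
    obtain ⟨K, hK, rfl⟩ := iha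
    obtain ⟨L, hL, rfl⟩ := ihb
    exact ⟨K ++ L, fun p hp => (List.mem_append.mp hp).elim (hK p) (hL p), FreeGroup.mul_mk.symm⟩
  | inv a _ ih =>
    obtain ⟨L, hL, rfl⟩ := ih
    refine ⟨FreeGroup.invRev L, fun p hp => ?_, FreeGroup.inv_mk.symm⟩
    obtain ⟨p', hp', rfl⟩ := List.mem_map.mp (List.mem_reverse.mp hp)
    exact hL p' hp'

end MagnusSubgroup

section OneRelatorGroup

variable {X P : Type*} [Group P] {r : FreeGroup X}

/-- The one-relator group `⟨X; r⟩`. -/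
abbrev OneRelatorGroup (r : FreeGroup X) : Type _ :=
  PresentedGroup ({r} : Set (FreeGroup X))

/-- The projection of the free group onto the one-relator group `⟨X; r⟩`. -/
abbrev proj (r : FreeGroup X) : FreeGroup X →* OneRelatorGroup r :=
  PresentedGroup.mk {r}

lemma proj_self (r : FreeGroup X) : proj r r = 1 :=
  PresentedGroup.one_of_mem rfl

/-- The homomorphism induced on `⟨X; r⟩` by a homomorphism of the free group killing `r`. -/
def descend (f : FreeGroup X →* P) (h : f r = 1) : OneRelatorGroup r →* P :=
  QuotientGroup.lift _ f (Subgroup.normalClosure_le_normal (Set.singleton_subset_iff.mpr h))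

@[simp]
lemma descend_proj (f : FreeGroup X →* P) (h : f r = 1) (g : FreeGroup X) :
    descend f h (proj r g) = f g :=
  rfl

lemma map_eq_one_of_proj_eq_one {f : FreeGroup X →* P} (h : f r = 1) {g : FreeGroup X}
    (hg : proj r g = 1) : f g = 1 := by
  rw [← descend_proj f h, hg, map_one]

lemma proj_pow_self (r : FreeGroup X) (n : ℕ) : proj r (r ^ n) = 1 := by
  rw [map_pow, proj_self, one_pow]

lemma proj_eq_one_of_proj_pow_eq_one {n : ℕ} {g : FreeGroup X} (hg : proj (r ^ n) g = 1) :
    proj r g = 1 :=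
  map_eq_one_of_proj_eq_one (proj_pow_self r n) hg

end OneRelatorGroup

section Fox

attribute [local instance] Finsupp.comapDistribMulAction

section MapDomain

variable {Q Ω A : Type*} [Group Q] [MulAction Q Ω] [AddCommGroup A] {p : Q → Ω}

lemma mapDomain_smul_of_map_mul (hp : ∀ a b, p (a * b) = a • p b) (a : Q) (m : Q →₀ A) :
    (a • m).mapDomain p = a • m.mapDomain p := by
  rw [Finsupp.comapSMul_def, Finsupp.comapSMul_def, ← Finsupp.mapDomain_comp,
    ← Finsupp.mapDomain_comp]
  exact congrArg (Finsupp.mapDomain · m) (funext (hp a))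

lemma sum_eq_zero_of_mul_left_invariant {u : Q} (hu : ∀ x : A, orderOf u • x = 0) {s : Finset Q}
    (hs : ∀ v ∈ Subgroup.zpowers u, ∀ a ∈ s, v * a ∈ s) {f : Q → A}
    (hf : ∀ v ∈ Subgroup.zpowers u, ∀ a, f (v * a) = f a) : ∑ a ∈ s, f a = 0 := by
  classical
  refine Finset.sum_cancels_of_partition_cancels (QuotientGroup.rightRel (Subgroup.zpowers u))
    fun x hx => ?_
  set o : Finset Q := {a ∈ s | QuotientGroup.rightRel (Subgroup.zpowers u) a x} with ho
  have orbit : (o : Set Q) = (· * x) '' (Subgroup.zpowers u : Set Q) := by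
    ext a
    simp only [ho, Finset.coe_filter, Set.mem_ofPred_eq, QuotientGroup.rightRel_apply,
      Set.mem_image]
    constructor
    · rintro ⟨-, ha⟩
      exact ⟨a * x⁻¹, by simpa using inv_mem ha, inv_mul_cancel_right a x⟩
    · rintro ⟨v, hv, rfl⟩
      exact ⟨hs v hv x hx, by simpa using hv⟩
  have card_orbit : o.card = orderOf u := by
    rw [← Set.ncard_coe_finset, orbit, Set.ncard_image_of_injective _ (mul_left_injective x)]
    exact Nat.card_zpowers u
  have const : ∀ a ∈ o, f a = f x := fun a ha => by
    obtain ⟨v, hv, rfl⟩ := orbit.le (Finset.mem_coe.mpr ha)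
    exact hf v hv x
  rw [Finset.sum_eq_card_nsmul const, card_orbit, hu]

lemma mapDomain_apply_eq_zero_of_smul_eq (hp : ∀ a b, p (a * b) = a • p b) {u : Q}
    (hu : ∀ x : A, orderOf u • x = 0) {m : Q →₀ A} (hm : u • m = m) {c : Ω} (hc : u • c = c) :
    m.mapDomain p c = 0 := by
  classical
  have zpowers_le : Subgroup.zpowers u ≤ MulAction.stabilizer Q m ⊓ MulAction.stabilizer Q c :=
    Subgroup.zpowers_le.mpr ⟨hm, hc⟩
  have apply_mul : ∀ v ∈ Subgroup.zpowers u, ∀ a, m (v * a) = m a := fun v hv a => by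
    conv_lhs => rw [← MulAction.mem_stabilizer_iff.mp (zpowers_le hv).1, Finsupp.comapSMul_apply,
      smul_eq_mul, inv_mul_cancel_left]
  have sum_fibre : m.mapDomain p c = ∑ a ∈ m.support with p a = c, m a := by
    rw [Finsupp.mapDomain, Finsupp.sum_apply, Finset.sum_filter]
    exact Finset.sum_congr rfl fun a _ => Finsupp.single_apply
  rw [sum_fibre]
  refine sum_eq_zero_of_mul_left_invariant hu (fun v hv a ha => ?_) apply_mul
  rw [Finset.mem_filter, Finsupp.mem_support_iff] at ha ⊢
  rw [apply_mul v hv, hp, ha.2]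
  exact ⟨ha.1, (zpowers_le hv).2⟩

end MapDomain

variable {X Q : Type*} [Group Q] (n : ℕ) (q : FreeGroup X →* Q) (S : Set X)

open Classical in
/-- The affine action of the free group on the group ring of `Q` over `ℤ/n` that is attached to
the Fox derivative: letters in `S` act through `q`, the others act as the conjugate of this linear
action by the translation by `1`. -/
noncomputable def fox : FreeGroup X →* Equiv.Perm (Q →₀ ZMod n) :=
  FreeGroup.lift fun w =>
    (Equiv.addRight (if w ∈ S then 0 else Finsupp.single 1 1))⁻¹ *
      MulAction.toPermHom Q (Q →₀ ZMod n) (q (FreeGroup.of w)) *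
      Equiv.addRight (if w ∈ S then 0 else Finsupp.single 1 1)

open Classical in
lemma fox_of_zpow (w : X) (k : ℤ) (m : Q →₀ ZMod n) :
    fox n q S (FreeGroup.of w ^ k) m =
      q (FreeGroup.of w ^ k) • (m + if w ∈ S then 0 else Finsupp.single 1 1) -
        if w ∈ S then 0 else Finsupp.single 1 1 := by
  set d : Q →₀ ZMod n := if w ∈ S then 0 else Finsupp.single 1 1 with hd
  have conj := conj_zpow (i := k) (a := (Equiv.addRight d)⁻¹)
    (b := MulAction.toPermHom Q (Q →₀ ZMod n) (q (FreeGroup.of w)))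
  rw [inv_inv, ← map_zpow, ← map_zpow] at conj
  rw [map_zpow, fox, FreeGroup.lift_apply_of, ← hd, conj]
  simp [sub_eq_add_neg]

variable {S}

lemma fox_of_zpow_of_mem {w : X} (hw : w ∈ S) (k : ℤ) (m : Q →₀ ZMod n) :
    fox n q S (FreeGroup.of w ^ k) m = q (FreeGroup.of w ^ k) • m := by
  rw [fox_of_zpow, if_pos hw, add_zero, sub_zero]

lemma fox_of_zpow_of_notMem {w : X} (hw : w ∉ S) (k : ℤ) (m : Q →₀ ZMod n) :
    fox n q S (FreeGroup.of w ^ k) m =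
      q (FreeGroup.of w ^ k) • (m + Finsupp.single 1 1) - Finsupp.single 1 1 := by
  rw [fox_of_zpow, if_neg hw]

variable {n q}

lemma fox_eq_one_of_mem_zpowers {r : FreeGroup X} (hr : q r = 1) {w : X}
    (hw : r ∈ Subgroup.zpowers (FreeGroup.of w)) : fox n q S r = 1 := by
  obtain ⟨k, rfl⟩ := Subgroup.mem_zpowers_iff.mp hw
  ext1 m
  by_cases h : w ∈ S
  · rw [fox_of_zpow_of_mem n q h, hr, one_smul, Equiv.Perm.one_apply]
  · rw [fox_of_zpow_of_notMem n q h, hr, one_smul, add_sub_cancel_right, Equiv.Perm.one_apply]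

variable (n q)

lemma fox_apply_of_mem {y : FreeGroup X} (hy : y ∈ magnusSubgroup S) (m : Q →₀ ZMod n) :
    fox n q S y m = q y • m := by
  have agree : fox n q S y = (MulAction.toPermHom Q (Q →₀ ZMod n)).comp q y :=
    map_eq_map_of_mem_magnusSubgroup
      (fun w hw => Equiv.ext fun m => by simpa using fox_of_zpow_of_mem n q hw 1 m) hy
  rw [agree, MonoidHom.comp_apply, MulAction.toPermHom_apply, MulAction.toPerm_apply]

lemma fox_apply (g : FreeGroup X) (m : Q →₀ ZMod n) :
    fox n q S g m = q g • m + fox n q S g 0 := by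
  have apply_of_zpow : ∀ (w : X) (k : ℤ) (m : Q →₀ ZMod n), fox n q S (FreeGroup.of w ^ k) m =
      q (FreeGroup.of w ^ k) • m + fox n q S (FreeGroup.of w ^ k) 0 := fun w k m => by
    rw [fox_of_zpow, fox_of_zpow, zero_add, smul_add, add_sub_assoc]
  induction g generalizing m with
  | C1 => simp
  | of w => simpa using apply_of_zpow w 1 m
  | inv_of w _ => simpa using apply_of_zpow w (-1) m
  | mul g h ihg ihh =>
    rw [map_mul, Equiv.Perm.mul_apply, Equiv.Perm.mul_apply, ihg, ihg (fox n q S h 0), ihh m,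
      map_mul, mul_smul, smul_add, add_assoc]

variable {n q} in
lemma fox_pow_eq_one {r : FreeGroup X} (hr : q r = 1) : fox n q S (r ^ n) = 1 := by
  have translation : ∀ (k : ℕ) (m : Q →₀ ZMod n), fox n q S (r ^ k) m =
      m + k • fox n q S r 0 := fun k m => by
    induction k with
    | zero => simp
    | succ k ih =>
      rw [pow_succ', map_mul, Equiv.Perm.mul_apply, fox_apply, hr, one_smul, ih, succ_nsmul,
        add_assoc]
  ext1 m
  rw [translation, ← Nat.cast_smul_eq_nsmul (ZMod n), ZMod.natCast_self, zero_smul, add_zero,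
    Equiv.Perm.one_apply]

/- The fundamental formula of Fox calculus, `∑ (∂g/∂w) (w - 1) = g - 1`, read in a quotient of `Q`
where the letters of `S` fix the base point. -/
lemma mapDomain_fox {Ω : Type*} [MulAction Q Ω] {p : Q → Ω} (hp : ∀ a b, p (a * b) = a • p b)
    (hS : ∀ w ∈ S, q (FreeGroup.of w) • p 1 = p 1) (g : FreeGroup X) (m : Q →₀ ZMod n) :
    (fox n q S g m).mapDomain p + Finsupp.single (p 1) 1 =
      q g • (m.mapDomain p + Finsupp.single (p 1) 1) := by
  have mapDomain_of_zpow (w : X) (k : ℤ) (m : Q →₀ ZMod n) :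
      (fox n q S (FreeGroup.of w ^ k) m).mapDomain p + Finsupp.single (p 1) 1 =
        q (FreeGroup.of w ^ k) • (m.mapDomain p + Finsupp.single (p 1) 1) := by
    by_cases h : w ∈ S
    · have fixed : q (FreeGroup.of w ^ k) • p 1 = p 1 := by
        rw [map_zpow]
        exact zpow_mem (MulAction.mem_stabilizer_iff.mpr (hS w h)) k
      rw [fox_of_zpow_of_mem n q h, mapDomain_smul_of_map_mul hp, smul_add,
        Finsupp.comapSMul_single, fixed]
    · rw [fox_of_zpow_of_notMem n q h, sub_eq_add_neg, Finsupp.mapDomain_add,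
        mapDomain_smul_of_map_mul hp, Finsupp.mapDomain_add, ← Finsupp.single_neg,
        Finsupp.mapDomain_single, Finsupp.mapDomain_single, Finsupp.single_neg,
        neg_add_cancel_right]
  induction g generalizing m with
  | C1 => simp
  | of w => simpa using mapDomain_of_zpow w 1 m
  | inv_of w _ => simpa using mapDomain_of_zpow w (-1) m
  | mul g h ihg ihh => rw [map_mul, Equiv.Perm.mul_apply, ihg, ihh, map_mul, mul_smul]

variable {n q}

theorem map_mem_map_magnusSubgroup_of_semiconjBy (hn : n ≠ 1) {r : FreeGroup X}
    (hfox : fox n q S r = 1) (hq : q r = 1) {g y y' : FreeGroup X} (hy : y ∈ magnusSubgroup S)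
    (hy' : y' ∈ magnusSubgroup S) (h : SemiconjBy (proj r g) (proj r y) (proj r y'))
    (hord : n ∣ orderOf (q y')) : q g ∈ (magnusSubgroup S).map q := by
  have : Nontrivial (ZMod n) := ZMod.nontrivial_iff.mpr hn
  set K := (magnusSubgroup S).map q
  have mk_mul (a : Q) {y : FreeGroup X} (hy : y ∈ magnusSubgroup S) :
      ((a * q y : Q) : Q ⧸ K) = a :=
    QuotientGroup.mk_mul_of_mem a (Subgroup.mem_map_of_mem q hy)
  set m := fox n q S g 0 with hm
  have invariant : q y' • m = m := by
    have semiconj : fox n q S g * fox n q S y = fox n q S y' * fox n q S g := by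
      simpa only [map_mul, descend_proj] using congrArg (descend _ hfox) h.eq
    simpa only [Equiv.Perm.mul_apply, fox_apply_of_mem n q hy, fox_apply_of_mem n q hy', smul_zero]
      using (DFunLike.congr_fun semiconj 0).symm
  have fixed : q y' • ((q g : Q) : Q ⧸ K) = (q g : Q) := by
    have semiconj : q g * q y = q y' * q g := by
      simpa only [map_mul, descend_proj] using congrArg (descend q hq) h.eq
    rw [MulAction.Quotient.smul_coe, smul_eq_mul, ← semiconj, mk_mul _ hy]
  have vanish : m.mapDomain ((↑) : Q → Q ⧸ K) (q g : Q) = 0 := by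
    refine mapDomain_apply_eq_zero_of_smul_eq (fun _ _ => rfl) (fun a => ?_) invariant fixed
    rw [nsmul_eq_mul, (ZMod.natCast_eq_zero_iff _ _).mpr hord, zero_mul]
  have formula : m.mapDomain (↑) + Finsupp.single ((1 : Q) : Q ⧸ K) 1 =
      Finsupp.single ((q g : Q) : Q ⧸ K) 1 := by
    have base (w : X) (hw : w ∈ S) :
        q (FreeGroup.of w) • ((1 : Q) : Q ⧸ K) = (1 : Q) := by
      rw [MulAction.Quotient.smul_coe, smul_eq_mul, mul_one, ← one_mul (q _),
        mk_mul 1 (of_mem_magnusSubgroup hw)]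
    rw [hm, mapDomain_fox n q (fun _ _ => rfl) base, Finsupp.mapDomain_zero, zero_add,
      Finsupp.comapSMul_single, MulAction.Quotient.smul_coe, smul_eq_mul, mul_one]
  by_contra hg
  have hne : ((q g : Q) : Q ⧸ K) ≠ (1 : Q) := fun h =>
    hg (by simpa using QuotientGroup.eq.mp h.symm)
  have coeff := DFunLike.congr_fun formula ((q g : Q) : Q ⧸ K)
  rw [Finsupp.add_apply, vanish, Finsupp.single_eq_of_ne hne, Finsupp.single_eq_same,
    add_zero] at coeff
  exact zero_ne_one coeff

end Fox

section StrongFreiheitssatz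

variable {X : Type*} {n : ℕ} {r : FreeGroup X} {S T : Set X}

/-- The induction hypothesis of the Magnus hierarchy. The letters in `S` generate a free subgroup
of `⟨X; r⟩` (Freiheitssatz), and in `⟨X; rⁿ⟩` the kernel of the projection to `⟨X; r⟩` meets
the centralizer of every nontrivial element of this Magnus subgroup trivially. -/
structure StrongFreiheitssatz (n : ℕ) (r : FreeGroup X) (S : Set X) : Prop where
  free : ∀ y ∈ magnusSubgroup S, proj r y = 1 → y = 1
  cent : ∀ g, proj r g = 1 → ∀ y ∈ magnusSubgroup S, y ≠ 1 →
    Commute (proj (r ^ n) g) (proj (r ^ n) y) → proj (r ^ n) g = 1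

lemma StrongFreiheitssatz.mono (h : StrongFreiheitssatz n r T) (hST : S ⊆ T) :
    StrongFreiheitssatz n r S where
  free y hy := h.free y (magnusSubgroup_mono hST hy)
  cent g hg y hy := h.cent g hg y (magnusSubgroup_mono hST hy)

lemma orderOf_eq_zero_of_free {P : Type*} [Group P] {q : FreeGroup X →* P}
    (hfree : ∀ y ∈ magnusSubgroup S, q y = 1 → y = 1) {y : FreeGroup X}
    (hy : y ∈ magnusSubgroup S) (hy1 : y ≠ 1) : orderOf (q y) = 0 :=
  orderOf_eq_zero_iff'.mpr fun k hk h =>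
    hy1 (by simpa [hk.ne'] using hfree (y ^ k) (pow_mem hy k) (by rw [map_pow, h]))

theorem StrongFreiheitssatz.mem_map_of_semiconjBy (hr : StrongFreiheitssatz n r S) (hn : n ≠ 1)
    {g y y' : FreeGroup X} (hy : y ∈ magnusSubgroup S) (hy1 : y ≠ 1)
    (hy' : y' ∈ magnusSubgroup S)
    (h : SemiconjBy (proj (r ^ n) g) (proj (r ^ n) y) (proj (r ^ n) y')) :
    proj (r ^ n) g ∈ (magnusSubgroup S).map (proj (r ^ n)) := by
  let root : OneRelatorGroup (r ^ n) →* OneRelatorGroup r := descend (proj r) (proj_pow_self r n)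
  have hroot : SemiconjBy (proj r g) (proj r y) (proj r y') := h.map root
  have hy'1 : y' ≠ 1 := by
    rintro rfl
    refine hy1 (hr.free y hy ?_)
    rwa [map_one, SemiconjBy, one_mul, mul_eq_left] at hroot
  obtain ⟨f, hf, hfg⟩ := map_mem_map_magnusSubgroup_of_semiconjBy hn
    (fox_pow_eq_one (proj_self r)) (proj_pow_self r n) hy hy' h
    (by rw [orderOf_eq_zero_of_free hr.free hy' hy'1]; exact dvd_zero n)
  -- Correcting `g` by `f` gives an element of the kernel that commutes with `y`.
  have trivial_root : proj r (f⁻¹ * g) = 1 := by rw [map_mul, map_inv, hfg, inv_mul_cancel]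
  have hyf : f⁻¹ * y' * f = y := by
    refine eq_of_mul_inv_eq_one (hr.free _ (mul_mem (mul_mem (mul_mem (inv_mem hf) hy') hf)
      (inv_mem hy)) ?_)
    simp only [map_mul, map_inv, hfg, mul_assoc]
    rw [← mul_assoc (proj r y'), ← hroot.eq, mul_inv_cancel_right, inv_mul_cancel]
  have commute : Commute (proj (r ^ n) (f⁻¹ * g)) (proj (r ^ n) y) := by
    rw [Commute, SemiconjBy]
    conv_rhs => rw [← hyf]
    simp only [map_mul, map_inv, mul_assoc, mul_inv_cancel_left, h.eq]
  refine ⟨f, hf, ?_⟩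
  have := hr.cent _ trivial_root y hy hy1 commute
  rwa [map_mul, map_inv, inv_mul_eq_one] at this

theorem strongFreiheitssatz_of_mem_zpowers (hn : n ≠ 1) {x : X}
    (hr : r ∈ Subgroup.zpowers (FreeGroup.of x)) : StrongFreiheitssatz n r {x}ᶜ := by
  classical
  have free : ∀ y ∈ magnusSubgroup {x}ᶜ, proj r y = 1 → y = 1 := fun y hy hry => by
    let kill : FreeGroup X →* FreeGroup X :=
      FreeGroup.lift fun w => if w = x then 1 else FreeGroup.of w
    have kill_r : kill r = 1 := by
      obtain ⟨k, rfl⟩ := Subgroup.mem_zpowers_iff.mp hr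
      simp [kill]
    have kill_y : kill y = MonoidHom.id _ y :=
      map_eq_map_of_mem_magnusSubgroup
        (fun w hw => by simp [kill, Set.mem_compl_singleton_iff.mp hw]) hy
    rw [← MonoidHom.id_apply _ y, ← kill_y]
    exact map_eq_one_of_proj_eq_one kill_r hry
  refine ⟨free, fun g hg y hy hy1 hc => ?_⟩
  obtain ⟨f, hf, hfg⟩ := map_mem_map_magnusSubgroup_of_semiconjBy hn
    (fox_eq_one_of_mem_zpowers (proj_self (r ^ n)) (pow_mem hr n)) (proj_self (r ^ n)) hy hy hc
    (by
      rw [orderOf_eq_zero_of_free (fun y hy h => free y hy (proj_eq_one_of_proj_pow_eq_one h))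
        hy hy1]
      exact dvd_zero n)
  have hf1 : f = 1 := free f hf <| by
    rw [← hg, ← div_eq_one, ← map_div]
    exact proj_eq_one_of_proj_pow_eq_one (by rw [map_div, hfg, div_self'])
  rw [← hfg, hf1, map_one]

lemma proj_of_ne_one (hn : n ≠ 1) (r : FreeGroup X) (b : X) :
    proj (r ^ n) (FreeGroup.of b) ≠ 1 := fun h => by
  have : Nontrivial (ZMod n) := ZMod.nontrivial_iff.mpr hn
  let count : FreeGroup X →* Multiplicative (ZMod n) :=
    FreeGroup.lift fun _ => Multiplicative.ofAdd 1
  have count_pow : count (r ^ n) = 1 := by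
    rw [map_pow, ← ofAdd_toAdd (count r), ← ofAdd_nsmul, nsmul_eq_mul, ZMod.natCast_self, zero_mul,
      ofAdd_zero]
  have count_of : count (FreeGroup.of b) = 1 := map_eq_one_of_proj_eq_one count_pow h
  rw [FreeGroup.lift_apply_of, ofAdd_eq_one] at count_of
  exact one_ne_zero count_of

theorem mem_zpowers_of_commute_of_mem_zpowers (hn : n ≠ 1) {b : X}
    (hr : r ∈ Subgroup.zpowers (FreeGroup.of b)) {g : FreeGroup X}
    (h : Commute (proj (r ^ n) g) (proj (r ^ n) (FreeGroup.of b))) :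
    proj (r ^ n) g ∈ Subgroup.zpowers (proj (r ^ n) (FreeGroup.of b)) := by
  have hb : FreeGroup.of b ∈ magnusSubgroup {b} := of_mem_magnusSubgroup (Set.mem_singleton b)
  rw [← MonoidHom.map_zpowers, ← magnusSubgroup_singleton]
  exact map_mem_map_magnusSubgroup_of_semiconjBy
    (mt orderOf_eq_one_iff.mp (proj_of_ne_one hn r b))
    (fox_eq_one_of_mem_zpowers (proj_self (r ^ n)) (pow_mem hr n)) (proj_self (r ^ n)) hb hb h
    dvd_rfl

end StrongFreiheitssatz

section HNN

open HNNExtension HNNExtension.NormalWord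

variable {H : Type*} [Group H] {A B : Subgroup H} {φ : A ≃* B}

/-- The exponent sum of the stable letter. -/
def height (φ : A ≃* B) : HNNExtension H A B φ →* Multiplicative ℤ :=
  HNNExtension.lift 1 (Multiplicative.ofAdd 1) fun _ => by
    simp only [MonoidHom.one_apply, mul_one, one_mul]

@[simp]
lemma height_of (h : H) : height φ (of h) = 1 := by simp [height]

@[simp]
lemma height_t : height φ t = Multiplicative.ofAdd 1 := by simp [height]

/-- `HasSigns φ g ε` says that `g` is the product of a reduced word whose stable letters have
the exponents `ε`. By Britton's lemma `g` determines `ε`. -/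
def HasSigns (φ : A ≃* B) (g : HNNExtension H A B φ) (ε : List ℤˣ) : Prop :=
  ∃ w : ReducedWord H A B, w.prod φ = g ∧ w.toList.map Prod.fst = ε

variable {g g' : HNNExtension H A B φ} {ε ε' : List ℤˣ} {u : ℤˣ} {m : ℕ}

lemma exists_hasSigns (g : HNNExtension H A B φ) : ∃ ε, HasSigns φ g ε := by
  obtain ⟨d⟩ := TransversalPair.nonempty H A B
  exact ⟨_, (equiv φ d g).toReducedWord, (equiv φ d).symm_apply_apply g, rfl⟩

lemma HasSigns.unique (h : HasSigns φ g ε) (h' : HasSigns φ g ε') : ε = ε' := by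
  obtain ⟨w, hw, rfl⟩ := h
  obtain ⟨w', hw', rfl⟩ := h'
  exact (ReducedWord.map_fst_eq_and_of_prod_eq φ (hw.trans hw'.symm)).1

lemma hasSigns_of (h : H) : HasSigns φ (of h) [] :=
  ⟨⟨h, [], List.isChain_nil⟩, by simp [ReducedWord.prod], rfl⟩

lemma hasSigns_t (u : ℤˣ) : HasSigns φ (t ^ (u : ℤ)) [u] :=
  ⟨⟨1, [(u, 1)], List.isChain_singleton _⟩, by simp [ReducedWord.prod], rfl⟩

lemma HasSigns.eq_of (h : HasSigns φ g []) : ∃ k, g = of k := by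
  obtain ⟨⟨k, l, c⟩, rfl, hl⟩ := h
  obtain rfl : l = [] := List.map_eq_nil_iff.mp hl
  exact ⟨k, by simp [ReducedWord.prod]⟩

lemma exists_prod_eq_prod_mul_of (w : ReducedWord H A B) (k : H) :
    ∃ w' : ReducedWord H A B, w'.prod φ = w.prod φ * of k ∧
      w'.toList.map Prod.fst = w.toList.map Prod.fst ∧ (w.toList ≠ [] → w'.head = w.head) := by
  obtain ⟨h, l, c⟩ := w
  obtain rfl | ⟨l, a, rfl⟩ := l.eq_nil_or_concat
  · exact ⟨⟨h * k, [], List.isChain_nil⟩, by simp [ReducedWord.prod], rfl, fun h => absurd rfl h⟩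
  · rw [List.concat_eq_append, List.isChain_append] at c
    have c' : (l ++ [(a.1, a.2 * k)]).IsChain (fun a b => a.2 ∈ toSubgroup A B a.1 → a.1 = b.1) :=
      List.isChain_append.mpr ⟨c.1, List.isChain_singleton _, by simpa using c.2.2⟩
    exact ⟨⟨h, _, c'⟩, by simp [ReducedWord.prod, mul_assoc], by simp, fun _ => rfl⟩

lemma HasSigns.mul (h : HasSigns φ g ε) (h' : HasSigns φ g' ε')
    (hj : ∀ a ∈ ε.getLast?, ∀ b ∈ ε'.head?, a = b) : HasSigns φ (g * g') (ε ++ ε') := by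
  obtain ⟨⟨k, l', c'⟩, rfl, rfl⟩ := h'
  obtain ⟨w, rfl, rfl⟩ := h
  obtain ⟨⟨h, l, c⟩, hprod, hsigns, -⟩ := exists_prod_eq_prod_mul_of (φ := φ) w k
  rw [← hsigns] at hj ⊢
  refine ⟨⟨h, l ++ l', c.append c' fun a ha b hb _ => hj a.1 ?_ b.1 ?_⟩, ?_, List.map_append⟩
  · simp [Option.mem_def.mp ha]
  · simp [Option.mem_def.mp hb]
  · simp only [ReducedWord.prod] at hprod ⊢
    rw [List.map_append, List.prod_append, ← mul_assoc, hprod, mul_assoc, mul_assoc]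

lemma HasSigns.replicate_mul (h : HasSigns φ g (List.replicate m u)) (h' : HasSigns φ g' ε)
    (hhead : ∀ a ∈ ε.head?, a = u) : HasSigns φ (g * g') (List.replicate m u ++ ε) :=
  h.mul h' fun a ha b hb => by
    rw [List.eq_of_mem_replicate (List.mem_of_mem_getLast? ha), hhead b hb]

lemma HasSigns.mul_replicate (h : HasSigns φ g ε) (h' : HasSigns φ g' (List.replicate m u))
    (hlast : ∀ a ∈ ε.getLast?, a = u) : HasSigns φ (g * g') (ε ++ List.replicate m u) :=
  h.mul h' fun a ha b hb => by
    rw [List.eq_of_mem_replicate (List.mem_of_mem_head? hb), hlast a ha]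

lemma HasSigns.pow (h : HasSigns φ g (List.replicate m u)) (k : ℕ) :
    HasSigns φ (g ^ k) (List.replicate (k * m) u) := by
  induction k with
  | zero => simpa using hasSigns_of (φ := φ) 1
  | succ k ih =>
    rw [pow_succ, Nat.succ_mul, List.replicate_add]
    exact ih.replicate_mul h fun a ha => List.eq_of_mem_replicate (List.mem_of_mem_head? ha)

lemma hasSigns_t_zpow (u : ℤˣ) (m : ℕ) :
    HasSigns φ (t ^ ((u : ℤ) * m)) (List.replicate m u) := by
  simpa [zpow_mul] using HasSigns.pow (m := 1) (hasSigns_t (φ := φ) u) m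

lemma HasSigns.height_eq (h : HasSigns φ g ε) :
    height φ g = Multiplicative.ofAdd (ε.map (fun u : ℤˣ => (u : ℤ))).sum := by
  obtain ⟨⟨h, l, c⟩, rfl, rfl⟩ := h
  simp only [ReducedWord.prod, map_mul, height_of, one_mul]
  clear c
  induction l with
  | nil => simp
  | cons a l ih =>
    simp only [List.map_cons, List.prod_cons, map_mul, ih, List.sum_cons, ofAdd_add, map_zpow,
      height_t, height_of, mul_one, ← ofAdd_zsmul, smul_eq_mul]

lemma HasSigns.exists_of_cons (h : HasSigns φ g (u :: ε)) :
    ∃ k g', HasSigns φ g' ε ∧ g = of k * t ^ (u : ℤ) * g' ∧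
      ∀ v v' : H, of v * g = g * of v' → k⁻¹ * v * k ∈ toSubgroup A B (-u) := by
  obtain ⟨⟨k, l, c⟩, rfl, hl⟩ := h
  obtain ⟨⟨u, k'⟩, l, rfl, rfl, rfl⟩ := List.map_eq_cons_iff.mp hl
  refine ⟨k, _, ⟨⟨k', l, c.tail⟩, rfl, rfl⟩, by simp [ReducedWord.prod, mul_assoc],
    fun v v' hv => ?_⟩
  obtain ⟨w, hprod, -, hhead⟩ := exists_prod_eq_prod_mul_of (φ := φ) ⟨k, (u, k') :: l, c⟩ v'
  have hmem := (ReducedWord.map_fst_eq_and_of_prod_eq φ (w₁ := ⟨v * k, (u, k') :: l, c⟩) (w₂ := w)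
    (by rw [hprod, ← hv]; simp only [ReducedWord.prod, map_mul, mul_assoc])).2 u (by simp)
  rw [hhead (List.cons_ne_nil _ _), ← inv_mem_iff] at hmem
  simpa [mul_assoc] using hmem

section Hyperbolic

lemma eq_nil_of_append_replicate {k : ℕ} (hk : ε.length ≤ k)
    (h : ε ++ List.replicate k u = List.replicate k u ++ ε)
    (hsum : (ε.map (fun u : ℤˣ => (u : ℤ))).sum = 0) : ε = [] := by
  have const : ε = List.replicate ε.length u := by
    have := congrArg (List.take ε.length) h
    rwa [List.take_left, List.take_append_of_le_length (by simpa using hk), List.take_replicate,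
      min_eq_left hk] at this
  rw [const, List.map_replicate, List.sum_replicate, nsmul_eq_mul, mul_eq_zero,
    or_iff_left u.ne_zero] at hsum
  exact List.length_eq_zero_iff.mp (by exact_mod_cast hsum)

lemma exists_eq_units_mul {e : ℤ} (he : e ≠ 0) : ∃ (u : ℤˣ) (m : ℕ), 0 < m ∧ e = u * m := by
  obtain ⟨m, rfl | rfl⟩ := e.eq_nat_or_neg
  · exact ⟨1, m, by omega, by simp⟩
  · exact ⟨-1, m, by omega, by simp⟩

/- If `g` starts and ends with the sign `u`, comparing `zᵏ g` with `g zᵏ` shows that all its signs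
are `u`; if it ends with `-u`, the word for `z g z⁻¹` is reduced, hence longer than that for `g`. -/
lemma eq_nil_of_commute {z : HNNExtension H A B φ} (hm : 0 < m)
    (hz : HasSigns φ z (List.replicate m u)) (hz' : HasSigns φ z⁻¹ (List.replicate m (-u)))
    (hc : Commute z g) (hg : height φ g = 1) (hε : HasSigns φ g ε) (hhead : ∀ a ∈ ε.head?, a = u) :
    ε = [] := by
  by_contra hnil
  have getLast_eq (v : ℤˣ) (hv : ε.getLast hnil = v) : ∀ a ∈ ε.getLast?, a = v := by
    simp [List.getLast?_eq_some_getLast hnil, hv]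
  by_cases hlast : ε.getLast hnil = u
  · have signs := (hc.pow_left ε.length).eq ▸ (hz.pow ε.length).replicate_mul hε hhead
    exact hnil (eq_nil_of_append_replicate (Nat.le_mul_of_pos_right _ hm)
      ((hε.mul_replicate (hz.pow _) (getLast_eq u hlast)).unique signs)
      (ofAdd_eq_one.mp (hε.height_eq.symm.trans hg)))
  · have signs := (hz.replicate_mul hε hhead).mul_replicate hz' <| by
      rw [List.getLast?_append_of_ne_nil _ hnil]
      exact getLast_eq (-u) (Int.units_ne_iff_eq_neg.mp hlast)
    rw [hc.eq, mul_inv_cancel_right] at signs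
    have := congrArg List.length (hε.unique signs)
    simp only [List.length_append, List.length_replicate] at this
    omega

lemma exists_eq_of_of_commute {z : HNNExtension H A B φ} (hm : 0 < m)
    (hz : HasSigns φ z (List.replicate m u)) (hz' : HasSigns φ z⁻¹ (List.replicate m (-u)))
    (hc : Commute z g) (hg : height φ g = 1) : ∃ k, g = of k := by
  obtain ⟨ε, hε⟩ := exists_hasSigns g
  suffices ε = [] from (this ▸ hε).eq_of
  by_cases hhead : ∀ a ∈ ε.head?, a = u
  · exact eq_nil_of_commute hm hz hz' hc hg hε hhead
  · push Not at hhead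
    obtain ⟨a, ha, hau⟩ := hhead
    refine eq_nil_of_commute hm hz' (by simpa using hz) hc.inv_left hg hε fun b hb => ?_
    rw [Option.mem_unique hb ha, Int.units_ne_iff_eq_neg.mp hau]

lemma mem_toSubgroup_of_t_zpow_mul_of_eq (hm : 0 < m) {h k : H}
    (hc : (t : HNNExtension H A B φ) ^ ((u : ℤ) * m) * of h = of k * t ^ ((u : ℤ) * m)) :
    h ∈ toSubgroup A B u := by
  by_contra hh
  obtain ⟨m, rfl⟩ : ∃ j, m = j + 1 := ⟨m - 1, by omega⟩
  have pinch : HasSigns φ (t ^ (u : ℤ) * of h * t ^ (-u : ℤ)) [u, -u] :=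
    ⟨⟨1, [(u, h), (-u, 1)], by simp [hh]⟩, by simp [ReducedWord.prod], rfl⟩
  have signs := ((hasSigns_t_zpow u m).replicate_mul pinch (by simp)).mul_replicate
    (hasSigns_t_zpow (-u) m) (by simp)
  have conj : t ^ ((u : ℤ) * m) * (t ^ (u : ℤ) * of h * t ^ (-u : ℤ)) *
      (t : HNNExtension H A B φ) ^ (((-u : ℤˣ) : ℤ) * m) = of k := by
    rw [Nat.cast_succ, mul_add, mul_one, zpow_add] at hc
    rw [← mul_inv_eq_of_eq_mul hc, Units.val_neg, neg_mul, zpow_neg, zpow_neg, mul_inv_rev]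
    simp only [mul_assoc]
  rw [conj] at signs
  simpa using signs.unique (hasSigns_of k)

theorem exists_eq_of_of_commute_of_mul_t_zpow {h : H} {e : ℤ} (he : e ≠ 0)
    (hc : Commute (of h * t ^ e) g) (hg : height φ g = 1) :
    ∃ u, ∃ k ∈ toSubgroup A B u, g = of k := by
  obtain ⟨u, m, hm, rfl⟩ := exists_eq_units_mul he
  have hz : HasSigns φ (of h * t ^ ((u : ℤ) * m)) (List.replicate m u) :=
    (hasSigns_of h).mul (hasSigns_t_zpow u m) (by simp)
  have hz' : HasSigns φ (of h * t ^ ((u : ℤ) * m))⁻¹ (List.replicate m (-u)) := by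
    simpa [← zpow_neg] using (hasSigns_t_zpow (-u) m).mul (hasSigns_of h⁻¹) (by simp)
  obtain ⟨k, rfl⟩ := exists_eq_of_of_commute hm hz hz' hc hg
  refine ⟨u, k, mem_toSubgroup_of_t_zpow_mul_of_eq (φ := φ) (k := h⁻¹ * k * h) hm ?_, rfl⟩
  rw [map_mul, map_mul, map_inv, mul_assoc, mul_assoc, ← hc.eq, mul_assoc,
    inv_mul_cancel_left]

end Hyperbolic

section Elliptic

lemma exists_of_mul_t_zpow_eq (φ : A ≃* B) (u : ℤˣ) {h : H} (hh : h ∈ toSubgroup A B (-u)) :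
    ∃ h', (of h : HNNExtension H A B φ) * t ^ (u : ℤ) = t ^ (u : ℤ) * of h' := by
  obtain rfl | rfl := Int.units_eq_one_or u
  · exact ⟨φ.symm ⟨h, hh⟩, by simpa using of_mul_t (φ := φ) ⟨h, hh⟩⟩
  · exact ⟨φ ⟨h, by simpa using hh⟩, by
      simpa using of_mul_inv_t (φ := φ) ⟨h, by simpa using hh⟩⟩

variable {V : Set H}

lemma HasSigns.exists_eq_t_zpow_mul_of
    (hV : ∀ v ∈ V, ∀ u : ℤˣ, ∃ v' ∈ V,
      (of v : HNNExtension H A B φ) * t ^ (u : ℤ) = t ^ (u : ℤ) * of v')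
    (hmal : ∀ v ∈ V, ∀ (u : ℤˣ) (h : H), h⁻¹ * v * h ∈ toSubgroup A B u → h ∈ toSubgroup A B u)
    (hε : HasSigns φ g ε) {v k : H} (hv : v ∈ V) (hc : of v * g = g * of k) :
    ∃ (e : ℤ) (h : H), g = t ^ e * of h := by
  induction ε generalizing g v with
  | nil =>
    obtain ⟨h, rfl⟩ := hε.eq_of
    exact ⟨0, h, by simp⟩
  | cons u ε ih =>
    obtain ⟨h, g', hg', rfl, hmem⟩ := hε.exists_of_cons
    obtain ⟨h', hh'⟩ := exists_of_mul_t_zpow_eq φ u (hmal v hv _ h (hmem v k hc))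
    obtain ⟨v', hv', hvv'⟩ := hV v hv u
    have hc' : of v' * (of h' * g') = of h' * g' * of k := by
      rw [hh'] at hc
      rw [← mul_right_inj (t ^ (u : ℤ)), ← mul_assoc, ← hvv']
      simpa only [mul_assoc] using hc
    obtain ⟨e, h'', he⟩ := ih (g := of h' * g') ((hasSigns_of h').mul hg' (by simp)) hv' hc'
    exact ⟨u + e, h'', by rw [hh', mul_assoc, he, zpow_add, mul_assoc]⟩

theorem exists_eq_of_of_mul_eq_mul_of
    (hV : ∀ v ∈ V, ∀ u : ℤˣ, ∃ v' ∈ V,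
      (of v : HNNExtension H A B φ) * t ^ (u : ℤ) = t ^ (u : ℤ) * of v')
    (hmal : ∀ v ∈ V, ∀ (u : ℤˣ) (h : H), h⁻¹ * v * h ∈ toSubgroup A B u → h ∈ toSubgroup A B u)
    (hg : height φ g = 1) {v k : H} (hv : v ∈ V) (hc : of v * g = g * of k) : ∃ h, g = of h := by
  obtain ⟨ε, hε⟩ := exists_hasSigns g
  obtain ⟨e, h, rfl⟩ := hε.exists_eq_t_zpow_mul_of hV hmal hv hc
  obtain rfl : e = 0 := by simpa [← ofAdd_zsmul] using hg
  exact ⟨h, by simp⟩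

end Elliptic

end HNN

section Rewriting

variable {X P : Type*} [Group P] {c : X → ℤ} {s : Option X} {i : ℤ} {L : List (X × Bool)}

/-- The weight of a letter or inverse letter, when the letters have weights `c`. -/
def weight (c : X → ℤ) (p : X × Bool) : ℤ := if p.2 then c p.1 else -c p.1

/-- The total weight of a word, when the letters have weights `c`. -/
def totalWeight (c : X → ℤ) (L : List (X × Bool)) : ℤ := (L.map (weight c)).sum

@[simp]
lemma totalWeight_nil (c : X → ℤ) : totalWeight c [] = 0 := rfl

@[simp]
lemma totalWeight_cons (c : X → ℤ) (p : X × Bool) (L : List (X × Bool)) :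
    totalWeight c (p :: L) = weight c p + totalWeight c L := rfl

/-- The label of a letter of a word in the Magnus rewriting, if the word before it has weight `i`.
A letter and its inverse carry the same label when they cancel. -/
def label (c : X → ℤ) (i : ℤ) (p : X × Bool) : ℤ := if p.2 then i else i - c p.1

open Classical in
/-- Magnus rewriting of a word, starting at weight `i`: each letter is labelled by the weight of the
word before it, and the stable letter `s`, if there is one, is deleted. -/
noncomputable def magnusRewrite (c : X → ℤ) (s : Option X) :
    ℤ → List (X × Bool) → List ((X × ℤ) × Bool)
  | _, [] => []
  | i, p :: L =>
    if s = some p.1 then magnusRewrite c s (i + weight c p) L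
    else ((p.1, label c i p), p.2) :: magnusRewrite c s (i + weight c p) L

@[simp]
lemma magnusRewrite_nil : magnusRewrite c s i [] = [] := rfl

lemma magnusRewrite_cons_of_eq {p : X × Bool} (h : s = some p.1) :
    magnusRewrite c s i (p :: L) = magnusRewrite c s (i + weight c p) L :=
  if_pos h

lemma magnusRewrite_cons_of_ne {p : X × Bool} (h : s ≠ some p.1) :
    magnusRewrite c s i (p :: L) =
      ((p.1, label c i p), p.2) :: magnusRewrite c s (i + weight c p) L :=
  if_neg h

lemma mem_of_mem_magnusRewrite {a : (X × ℤ) × Bool} (h : a ∈ magnusRewrite c s i L) :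
    (a.1.1, a.2) ∈ L := by
  induction L generalizing i with
  | nil => simp at h
  | cons p L ih =>
    by_cases hs : s = some p.1
    · rw [magnusRewrite_cons_of_eq hs] at h
      exact List.mem_cons_of_mem p (ih h)
    · rw [magnusRewrite_cons_of_ne hs, List.mem_cons] at h
      obtain rfl | h := h
      · exact List.mem_cons_self
      · exact List.mem_cons_of_mem p (ih h)

open Classical in
/-- The homomorphism of the free group sending the stable letter `s` to a power of `τ` and each
other letter `w` to `v w`, multiplied by a power of `τ`; the exponents of `τ` are the weights. -/
noncomputable def magnusHom (c : X → ℤ) (s : Option X) (τ : P) (v : X → P) : FreeGroup X →* P :=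
  FreeGroup.lift fun w => if s = some w then τ ^ c w else v w * τ ^ c w

/-- The homomorphism sending the letter `w` with label `j` to `τ ^ j * v w * τ ^ (-j)`. -/
def conjHom (τ : P) (v : X → P) : FreeGroup (X × ℤ) →* P :=
  FreeGroup.lift fun d => τ ^ d.2 * v d.1 * τ ^ (-d.2)

@[simp]
lemma conjHom_of (τ : P) (v : X → P) (w : X) (j : ℤ) :
    conjHom τ v (FreeGroup.of (w, j)) = τ ^ j * v w * τ ^ (-j) :=
  FreeGroup.lift_apply_of

lemma magnusHom_of_of_eq (τ : P) (v : X → P) {w : X} (h : s = some w) :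
    magnusHom c s τ v (FreeGroup.of w) = τ ^ c w := by
  rw [magnusHom, FreeGroup.lift_apply_of, if_pos h]

lemma magnusHom_of_of_ne (τ : P) (v : X → P) {w : X} (h : s ≠ some w) :
    magnusHom c s τ v (FreeGroup.of w) = v w * τ ^ c w := by
  rw [magnusHom, FreeGroup.lift_apply_of, if_neg h]

lemma zpow_mul_magnusHom_mk_singleton_of_eq (τ : P) (v : X → P) (i : ℤ) {p : X × Bool}
    (h : s = some p.1) :
    τ ^ i * magnusHom c s τ v (FreeGroup.mk [p]) = τ ^ (i + weight c p) := by
  obtain ⟨w, _ | _⟩ := p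
  · rw [mk_singleton_false, map_inv, magnusHom_of_of_eq τ v h, zpow_add, ← zpow_neg]
    rfl
  · exact (congrArg (τ ^ i * ·) (magnusHom_of_of_eq τ v h)).trans (zpow_add τ i _).symm

lemma zpow_mul_magnusHom_mk_singleton_of_ne (τ : P) (v : X → P) (i : ℤ) {p : X × Bool}
    (h : s ≠ some p.1) :
    τ ^ i * magnusHom c s τ v (FreeGroup.mk [p]) =
      conjHom τ v (FreeGroup.mk [((p.1, label c i p), p.2)]) * τ ^ (i + weight c p) := by
  obtain ⟨w, _ | _⟩ := p
  · simp only [mk_singleton_false, map_inv, magnusHom_of_of_ne τ v h, conjHom_of, label, weight,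
      Bool.false_eq_true, if_false]
    group
  · change τ ^ i * magnusHom c s τ v (FreeGroup.of w) =
      conjHom τ v (FreeGroup.of (w, i)) * τ ^ (i + c w)
    rw [magnusHom_of_of_ne τ v h, conjHom_of]
    group

lemma zpow_mul_magnusHom_mk (c : X → ℤ) (s : Option X) (τ : P) (v : X → P) (i : ℤ)
    (L : List (X × Bool)) :
    τ ^ i * magnusHom c s τ v (FreeGroup.mk L) =
      conjHom τ v (FreeGroup.mk (magnusRewrite c s i L)) * τ ^ (i + totalWeight c L) := by
  induction L generalizing i with
  | nil => simp [← FreeGroup.one_eq_mk]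
  | cons p L ih =>
    rw [totalWeight_cons, ← add_assoc, mk_cons p, map_mul, ← mul_assoc]
    by_cases hs : s = some p.1
    · rw [zpow_mul_magnusHom_mk_singleton_of_eq τ v i hs, ih, magnusRewrite_cons_of_eq hs]
    · rw [zpow_mul_magnusHom_mk_singleton_of_ne τ v i hs, mul_assoc, ih,
        magnusRewrite_cons_of_ne hs, mk_cons _ (magnusRewrite ..), map_mul, mul_assoc]

lemma semiconjBy_magnusHom_conjHom (s : Option X) (τ : P) (v : X → P) (i : ℤ)
    (hL : totalWeight c L = 0) (k : ℕ) :
    SemiconjBy (τ ^ i) (magnusHom c s τ v (FreeGroup.mk L ^ k))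
      (conjHom τ v (FreeGroup.mk (magnusRewrite c s i L) ^ k)) := by
  rw [map_pow, map_pow]
  refine SemiconjBy.pow_right ?_ k
  rw [SemiconjBy, zpow_mul_magnusHom_mk, hL, add_zero]

end Rewriting

section Root

universe u

variable {G : Type u} [Group G]

/-- A permutation of `N + 1` copies of `G` whose `(N + 1)`-st power is left multiplication by `g`
on each copy. -/
def cyclicRoot (g : G) (N : ℕ) : Equiv.Perm (Fin (N + 1) × G) :=
  Equiv.prodShear (finRotate (N + 1)) fun i => if i = Fin.last N then Equiv.mulLeft g else 1

lemma cyclicRoot_pow_apply_zero (g : G) (N : ℕ) (i : Fin (N + 1)) (a : G) :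
    (cyclicRoot g N ^ (i : ℕ)) (0, a) = (i, a) := by
  induction i using Fin.induction with
  | zero => simp
  | succ i ih =>
    rw [Fin.val_succ, pow_succ', Equiv.Perm.mul_apply, ← Fin.val_castSucc, ih]
    simp [cyclicRoot, Equiv.prodShear, (Fin.castSucc_lt_last i).ne]

lemma cyclicRoot_pow_apply (g : G) (N : ℕ) (i : Fin (N + 1)) (a : G) :
    (cyclicRoot g N ^ (N + 1)) (i, a) = (i, g * a) := by
  have last : cyclicRoot g N (Fin.last N, a) = (0, g * a) := by
    simp [cyclicRoot, Equiv.prodShear]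
  have zero : (cyclicRoot g N ^ (N + 1)) (0, a) = (0, g * a) := by
    have := cyclicRoot_pow_apply_zero g N (Fin.last N) a
    rw [Fin.val_last] at this
    rw [pow_succ', Equiv.Perm.mul_apply, this, last]
  rw [← cyclicRoot_pow_apply_zero g N i a, ← Equiv.Perm.mul_apply, ← pow_mul_comm,
    Equiv.Perm.mul_apply, zero, cyclicRoot_pow_apply_zero]

lemma exists_injective_zpow_eq (g : G) {k : ℤ} (hk : k ≠ 0) :
    ∃ (P : Type u) (_ : Group P) (ι : G →* P) (τ : P), Function.Injective ι ∧ τ ^ k = ι g := by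
  obtain ⟨N, hN⟩ := Nat.exists_eq_succ_of_ne_zero (Int.natAbs_ne_zero.mpr hk)
  let ι : G →* Equiv.Perm (Fin (N + 1) × G) :=
    MonoidHom.mk' (fun a => Equiv.prodCongr (Equiv.refl _) (Equiv.mulLeft a)) fun a b => by
      ext p <;> simp [mul_assoc]
  have injective : Function.Injective ι := fun a b h => by
    simpa [ι] using congrArg Prod.snd (Equiv.congr_fun h (0, 1))
  have pow_eq : cyclicRoot g N ^ (N + 1) = ι g :=
    Equiv.ext fun p => cyclicRoot_pow_apply g N p.1 p.2
  obtain hk | hk := Int.natAbs_eq k <;> rw [hk, hN, Nat.succ_eq_add_one]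
  · exact ⟨_, inferInstance, ι, cyclicRoot g N, injective, by rw [zpow_natCast, pow_eq]⟩
  · exact ⟨_, inferInstance, ι, (cyclicRoot g N)⁻¹, injective, by
      rw [zpow_neg, inv_zpow, inv_inv, zpow_natCast, pow_eq]⟩

lemma exists_magnusHom_eq_comp {X : Type*} (ψ : FreeGroup X →* G) {c : X → ℤ} {s : Option X}
    (hs : ∀ w ∈ s, c w ≠ 0) :
    ∃ (P : Type u) (_ : Group P) (ι : G →* P) (τ : P) (v : X → P),
      Function.Injective ι ∧ magnusHom c s τ v = ι.comp ψ := by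
  obtain ⟨P, _, ι, τ, hι, hτ⟩ : ∃ (P : Type u) (_ : Group P) (ι : G →* P) (τ : P),
      Function.Injective ι ∧ ∀ w ∈ s, τ ^ c w = ι (ψ (FreeGroup.of w)) := by
    obtain _ | w := s
    · exact ⟨G, _, MonoidHom.id G, 1, Function.injective_id, by simp⟩
    · simpa using exists_injective_zpow_eq (ψ (FreeGroup.of w)) (hs w rfl)
  refine ⟨P, _, ι, τ, fun w => ι (ψ (FreeGroup.of w)) * (τ ^ c w)⁻¹, hι,
    FreeGroup.ext_hom _ _ fun w => ?_⟩
  by_cases h : s = some w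
  · rw [magnusHom_of_of_eq _ _ h, hτ w h, MonoidHom.comp_apply]
  · rw [magnusHom_of_of_ne _ _ h, inv_mul_cancel_right, MonoidHom.comp_apply]

end Root

section Splitting

open HNNExtension

section Level

variable {X P : Type*} [Group P] {x : X} {a b : ℤ}

/-- The labelled letters whose label lies in `[a, b)` if they come from `x`. -/
def level (x : X) (a b : ℤ) : Set (X × ℤ) := {d | d.1 = x → a ≤ d.2 ∧ d.2 < b}

lemma level_zero_zero_subset : level x 0 0 ⊆ level x a b := fun d hd hx => by
  have := hd hx
  omega

/-- The automorphism adding `1` to all labels. -/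
def shift : FreeGroup (X × ℤ) ≃* FreeGroup (X × ℤ) :=
  FreeGroup.freeGroupCongr (Equiv.prodCongr (Equiv.refl X) (Equiv.addRight 1))

@[simp]
lemma shift_of (w : X) (j : ℤ) : shift (FreeGroup.of (w, j)) = FreeGroup.of (w, j + 1) := rfl

lemma map_shift_magnusSubgroup_level :
    (magnusSubgroup (level x a b)).map (shift : FreeGroup (X × ℤ) ≃* _).toMonoidHom =
      magnusSubgroup (level x (a + 1) (b + 1)) := by
  rw [magnusSubgroup, magnusSubgroup, MonoidHom.map_closure, Set.image_image]
  congr 1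
  ext y
  constructor
  · rintro ⟨d, hd, rfl⟩
    exact ⟨(d.1, d.2 + 1), fun hx => by have := hd hx; dsimp only; omega, rfl⟩
  · rintro ⟨⟨w, j⟩, hd, rfl⟩
    refine ⟨(w, j - 1), fun hx => ?_, by simp⟩
    have := hd hx
    dsimp only at this ⊢
    omega

lemma conjHom_shift (τ : P) (v : X → P) (y : FreeGroup (X × ℤ)) :
    conjHom τ v (shift y) = τ * conjHom τ v y * τ⁻¹ := by
  suffices (conjHom τ v).comp shift.toMonoidHom = (MulAut.conj τ).toMonoidHom.comp (conjHom τ v)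
    from DFunLike.congr_fun this y
  ext d
  change conjHom τ v (shift (FreeGroup.of (d.1, d.2))) =
    τ * conjHom τ v (FreeGroup.of (d.1, d.2)) * τ⁻¹
  rw [shift_of, conjHom_of, conjHom_of]
  group

end Level

lemma exists_mulEquiv_map {F H : Type*} [Group F] [Group H] (π : F →* H) (θ : F ≃* F)
    {K L : Subgroup F} (hθ : K.map θ.toMonoidHom = L) (hK : ∀ y ∈ K, π y = 1 → y = 1)
    (hL : ∀ y ∈ L, π y = 1 → y = 1) :
    ∃ φ : K.map π ≃* L.map π,
      ∀ y (hy : y ∈ K), (φ ⟨π y, Subgroup.mem_map_of_mem π hy⟩ : H) = π (θ y) := by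
  subst hθ
  have bijective (N : Subgroup F) (hN : ∀ y ∈ N, π y = 1 → y = 1) :
      Function.Bijective (π.subgroupMap N) :=
    ⟨(injective_iff_map_eq_one _).mpr fun y h => Subtype.ext (hN y y.2 (congrArg Subtype.val h)),
      π.subgroupMap_surjective N⟩
  let e := MulEquiv.ofBijective _ (bijective K hK)
  refine ⟨e.symm.trans ((θ.subgroupMap K).trans (MulEquiv.ofBijective _ (bijective _ hL))),
    fun y hy => ?_⟩
  have : e.symm ⟨π y, Subgroup.mem_map_of_mem π hy⟩ = ⟨y, hy⟩ := e.symm_apply_eq.mpr rfl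
  rw [MulEquiv.trans_apply, this]
  rfl

variable {X H P : Type*} [Group H] [Group P] {x : X} {m : ℤ}

/-- The subgroup of a quotient of the group on labelled letters generated by `level x a b`. -/
abbrev levelSubgroup (π : FreeGroup (X × ℤ) →* H) (x : X) (a b : ℤ) : Subgroup H :=
  (magnusSubgroup (level x a b)).map π

variable {π : FreeGroup (X × ℤ) →* H} {φ : levelSubgroup π x 0 m ≃* levelSubgroup π x 1 (m + 1)}
  {c : X → ℤ} {s : Option X}

/-- The isomorphism between the associated subgroups of a Magnus splitting is induced by the
shift of the labels. -/
def IsShift (φ : levelSubgroup π x 0 m ≃* levelSubgroup π x 1 (m + 1)) : Prop :=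
  ∀ y (hy : y ∈ magnusSubgroup (level x 0 m)),
    (φ ⟨π y, Subgroup.mem_map_of_mem π hy⟩ : H) = π (shift y)

lemma exists_isShift (h₀ : ∀ y ∈ magnusSubgroup (level x 0 m), π y = 1 → y = 1)
    (h₁ : ∀ y ∈ magnusSubgroup (level x 1 (m + 1)), π y = 1 → y = 1) :
    ∃ φ : levelSubgroup π x 0 m ≃* levelSubgroup π x 1 (m + 1), IsShift φ :=
  exists_mulEquiv_map π shift map_shift_magnusSubgroup_level h₀ h₁

lemma IsShift.t_mul_of (hφ : IsShift φ) {y : FreeGroup (X × ℤ)}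
    (hy : y ∈ magnusSubgroup (level x 0 m)) :
    (t : HNNExtension H _ _ φ) * of (π y) = of (π (shift y)) * t := by
  rw [← hφ y hy, ← HNNExtension.t_mul_of]

/-- The homomorphism to the HNN extension of a quotient of the group on labelled letters that
realizes Magnus rewriting. -/
noncomputable def magnusSplitting (c : X → ℤ) (s : Option X)
    (φ : levelSubgroup π x 0 m ≃* levelSubgroup π x 1 (m + 1)) :
    FreeGroup X →* HNNExtension H _ _ φ :=
  magnusHom c s t fun w => of (π (FreeGroup.of (w, 0)))

lemma IsShift.conjHom_t_of (hφ : IsShift φ) {w : X} {j : ℤ} (hj : (w, j) ∈ level x 0 (m + 1)) :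
    conjHom (t : HNNExtension H _ _ φ) (fun w => of (π (FreeGroup.of (w, 0))))
      (FreeGroup.of (w, j)) = of (π (FreeGroup.of (w, j))) := by
  have step {j : ℤ} (hj : (w, j) ∈ level x 0 m) := hφ.t_mul_of (of_mem_magnusSubgroup hj)
  have conj_succ (j : ℤ) := conjHom_shift (t : HNNExtension H _ _ φ)
    (fun w => of (π (FreeGroup.of (w, 0)))) (FreeGroup.of (w, j))
  simp only [shift_of] at step conj_succ
  induction j using Int.induction_on with
  | zero => simp
  | succ j ih =>
    rw [conj_succ, ih fun hx => by have := hj hx; dsimp only at this ⊢; omega, step,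
      mul_inv_cancel_right]
    exact fun hx => by have := hj hx; dsimp only at this ⊢; omega
  | pred j ih =>
    have hw : w ≠ x := fun hx => by have := hj hx; dsimp only at this; omega
    have conj := conj_succ (-j - 1)
    have shifted := step (j := -j - 1) (absurd · hw)
    rw [sub_add_cancel] at conj shifted
    rw [ih (absurd · hw), eq_mul_inv_iff_mul_eq] at conj
    exact mul_left_cancel (conj.symm.trans shifted.symm)

lemma IsShift.conjHom_t (hφ : IsShift φ) {y : FreeGroup (X × ℤ)}
    (hy : y ∈ magnusSubgroup (level x 0 (m + 1))) :
    conjHom (t : HNNExtension H _ _ φ) (fun w => of (π (FreeGroup.of (w, 0)))) y = of (π y) :=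
  map_eq_map_of_mem_magnusSubgroup (g := of.comp π) (fun _ hd => hφ.conjHom_t_of hd) hy

lemma IsShift.exists_comp_magnusSplitting (hφ : IsShift φ) (c : X → ℤ) (s : Option X) (f : H →* P)
    {τ : P} (hf : ∀ y ∈ magnusSubgroup (level x 0 m), τ * f (π y) = f (π (shift y)) * τ) :
    ∃ F : HNNExtension H _ _ φ →* P, F.comp of = f ∧
      F.comp (magnusSplitting c s φ) = magnusHom c s τ fun w => f (π (FreeGroup.of (w, 0))) := by
  have rel : ∀ a : levelSubgroup π x 0 m, τ * f a = f (φ a : H) * τ := by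
    rintro ⟨_, y, hy, rfl⟩
    rw [hφ y hy, hf y hy]
  refine ⟨HNNExtension.lift f τ rel, MonoidHom.ext fun h => lift_of f τ rel h,
    FreeGroup.ext_hom _ _ fun w => ?_⟩
  by_cases h : s = some w
  · simp [magnusSplitting, magnusHom_of_of_eq _ _ h]
  · simp [magnusSplitting, magnusHom_of_of_ne _ _ h]

/-- `r'` is a Magnus rewriting of `r` in which the labels of `x` lie between `0` and `m`. -/
structure IsMagnusRewriting (c : X → ℤ) (s : Option X) (x : X) (m : ℤ) (r : FreeGroup X)
    (r' : FreeGroup (X × ℤ)) : Prop where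
  weight_ne_zero : ∀ w ∈ s, c w ≠ 0
  exists_word : ∃ i L, totalWeight c L = 0 ∧ FreeGroup.mk L = r ∧
    FreeGroup.mk (magnusRewrite c s i L) = r'
  mem_level : r' ∈ magnusSubgroup (level x 0 (m + 1))

variable {r g : FreeGroup X} {r' : FreeGroup (X × ℤ)} {n k : ℕ}

lemma IsMagnusRewriting.exists_semiconjBy (h : IsMagnusRewriting c s x m r r') (τ : P) (v : X → P)
    (k : ℕ) : ∃ i : ℤ, SemiconjBy (τ ^ i) (magnusHom c s τ v (r ^ k)) (conjHom τ v (r' ^ k)) := by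
  obtain ⟨i, L, hL, rfl, rfl⟩ := h.exists_word
  exact ⟨i, semiconjBy_magnusHom_conjHom s τ v i hL k⟩

lemma IsMagnusRewriting.magnusHom_eq_one_iff (h : IsMagnusRewriting c s x m r r') (τ : P)
    (v : X → P) (k : ℕ) : magnusHom c s τ v (r ^ k) = 1 ↔ conjHom τ v (r' ^ k) = 1 := by
  obtain ⟨i, hi⟩ := h.exists_semiconjBy τ v k
  rw [← mul_eq_left (a := τ ^ i), hi.eq, mul_eq_right]

lemma IsMagnusRewriting.magnusSplitting_eq_one (h : IsMagnusRewriting c s x m r r')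
    (hφ : IsShift φ) (hr' : π (r' ^ k) = 1) (hg : proj (r ^ k) g = 1) :
    magnusSplitting c s φ g = 1 := by
  refine map_eq_one_of_proj_eq_one ((h.magnusHom_eq_one_iff _ _ k).mpr ?_) hg
  rw [hφ.conjHom_t (pow_mem h.mem_level k), hr', map_one]

lemma IsMagnusRewriting.height_magnusSplitting (h : IsMagnusRewriting c s x m r r')
    (hφ : IsShift φ) (hg : proj r g = 1) : height φ (magnusSplitting c s φ g) = 1 := by
  obtain ⟨i, hi⟩ := h.exists_semiconjBy (t : HNNExtension H _ _ φ)
    (fun w => of (π (FreeGroup.of (w, 0)))) 1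
  have := (hi.map (height φ)).eq
  rw [pow_one, pow_one, hφ.conjHom_t h.mem_level, height_of, one_mul] at this
  exact map_eq_one_of_proj_eq_one (f := (height φ).comp (magnusSplitting c s φ))
    (mul_eq_left.mp this) hg

lemma IsMagnusRewriting.proj_eq_one_of_magnusSplitting (h : IsMagnusRewriting c s x m r r')
    {φ : levelSubgroup (proj (r' ^ k)) x 0 m ≃* levelSubgroup (proj (r' ^ k)) x 1 (m + 1)}
    (hφ : IsShift φ) (hg : magnusSplitting c s φ g = 1) : proj (r ^ k) g = 1 := by
  obtain ⟨P, _, ι, τ, v, hι, hP⟩ := exists_magnusHom_eq_comp (proj (r ^ k)) h.weight_ne_zero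
  have hr' : conjHom τ v (r' ^ k) = 1 := by
    rw [← h.magnusHom_eq_one_iff, hP, MonoidHom.comp_apply, proj_self, map_one]
  obtain ⟨F, -, hF⟩ := hφ.exists_comp_magnusSplitting c s (descend (conjHom τ v) hr') (τ := τ)
    fun y _ => by rw [descend_proj, descend_proj, conjHom_shift, inv_mul_cancel_right]
  simp only [descend_proj, conjHom_of, neg_zero, zpow_zero, one_mul, mul_one, hP] at hF
  have := DFunLike.congr_fun hF g
  rw [MonoidHom.comp_apply, hg, map_one] at this
  exact hι (this.symm.trans (map_one ι).symm)

lemma IsMagnusRewriting.proj_eq_one_of_magnusSplitting_eq_of (h : IsMagnusRewriting c s x m r r')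
    {φ : levelSubgroup (proj (r' ^ n)) x 0 m ≃* levelSubgroup (proj (r' ^ n)) x 1 (m + 1)}
    (hφ : IsShift φ) {φ₁ : levelSubgroup (proj r') x 0 m ≃* levelSubgroup (proj r') x 1 (m + 1)}
    (hφ₁ : IsShift φ₁) (hg : proj r g = 1) {u : FreeGroup (X × ℤ)}
    (hu : magnusSplitting c s φ g = of (proj (r' ^ n) u)) : proj r' u = 1 := by
  obtain ⟨F, hFof, hF⟩ := hφ.exists_comp_magnusSplitting c s (τ := t)
    ((of (φ := φ₁)).comp (descend (proj r') (proj_pow_self r' n))) fun y hy => hφ₁.t_mul_of hy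
  have := DFunLike.congr_fun hF g
  rw [MonoidHom.comp_apply, hu, ← MonoidHom.comp_apply, hFof] at this
  refine of_injective φ₁ (this.trans (?_ : magnusSplitting c s φ₁ g = of 1))
  rw [map_one]
  exact h.magnusSplitting_eq_one (k := 1) hφ₁ (by rw [pow_one, proj_self]) (by rwa [pow_one])

lemma IsShift.exists_magnusSplitting_eq (hφ : IsShift φ) (hs : ∀ w ∈ s, c w ≠ 0)
    {y : FreeGroup X} (hy : y ∈ magnusSubgroup {x}ᶜ) :
    ∃ z ∈ magnusSubgroup (level x 0 0), ∃ e : ℤ,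
      magnusSplitting c s φ y = of (π z) * t ^ e ∧ (z = 1 → e = 0 → y = 1) := by
  obtain ⟨L, hL, rfl⟩ := exists_mk_eq_of_mem_magnusSubgroup hy
  have mem : FreeGroup.mk (magnusRewrite c s 0 L) ∈ magnusSubgroup (level x 0 0) :=
    mk_mem_magnusSubgroup fun p hp hx => absurd hx (hL _ (mem_of_mem_magnusRewrite hp))
  refine ⟨_, mem, totalWeight c L, ?_, fun hz he => ?_⟩
  · have := zpow_mul_magnusHom_mk c s (t : HNNExtension H _ _ φ)
      (fun w => of (π (FreeGroup.of (w, 0)))) 0 L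
    rwa [zpow_zero, one_mul, zero_add,
      hφ.conjHom_t (magnusSubgroup_mono level_zero_zero_subset mem)] at this
  · obtain ⟨P, _, ι, τ, v, hι, hP⟩ := exists_magnusHom_eq_comp (MonoidHom.id (FreeGroup X)) hs
    have := zpow_mul_magnusHom_mk c s τ v 0 L
    rw [hP, hz, he, map_one, add_zero, zpow_zero, one_mul, one_mul] at this
    exact hι (this.trans (map_one ι).symm)

end Splitting

section HierarchyStep

open HNNExtension

variable {X : Type*} {S : Set X} {x : X} {m : ℤ} {c : X → ℤ} {s : Option X} {r : FreeGroup X}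
  {r' : FreeGroup (X × ℤ)} {n : ℕ}

lemma StrongFreiheitssatz.mem_map_of_conj_mem_map (hr : StrongFreiheitssatz n r S) (hn : n ≠ 1)
    {y : FreeGroup X} (hy : y ∈ magnusSubgroup S) (hy1 : y ≠ 1) {h : OneRelatorGroup (r ^ n)}
    (hh : h⁻¹ * proj (r ^ n) y * h ∈ (magnusSubgroup S).map (proj (r ^ n))) :
    h ∈ (magnusSubgroup S).map (proj (r ^ n)) := by
  obtain ⟨g, rfl⟩ := PresentedGroup.mk_surjective _ h
  obtain ⟨y', hy', heq⟩ := hh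
  rw [← inv_mem_iff, ← map_inv]
  refine hr.mem_map_of_semiconjBy hn hy hy1 hy' ?_
  rw [map_inv, SemiconjBy, heq, mul_inv_cancel_right]

lemma free_of_isMagnusRewriting (h : IsMagnusRewriting c s x m r r')
    {φ : levelSubgroup (proj r') x 0 m ≃* levelSubgroup (proj r') x 1 (m + 1)} (hφ : IsShift φ)
    (hfree : ∀ z ∈ magnusSubgroup (level x 0 m), proj r' z = 1 → z = 1) {y : FreeGroup X}
    (hy : y ∈ magnusSubgroup {x}ᶜ) (hy1 : proj r y = 1) : y = 1 := by
  obtain ⟨z, hz, e, hye, hone⟩ := hφ.exists_magnusSplitting_eq h.weight_ne_zero hy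
  rw [h.magnusSplitting_eq_one (k := 1) hφ (by rw [pow_one, proj_self]) (by rwa [pow_one])] at hye
  obtain rfl : e = 0 := by simpa [← ofAdd_zsmul] using (congrArg (height φ) hye).symm
  rw [zpow_zero, mul_one, ← map_one of] at hye
  exact hone (hfree z (magnusSubgroup_mono level_zero_zero_subset hz) (of_injective φ hye).symm) rfl

variable {φ : levelSubgroup (proj (r' ^ n)) x 0 m ≃* levelSubgroup (proj (r' ^ n)) x 1 (m + 1)}
  {z : FreeGroup (X × ℤ)}

lemma IsShift.exists_of_mul_t_zpow_eq (hφ : IsShift φ) (hz : z ∈ magnusSubgroup (level x 0 0))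
    (u : ℤˣ) : ∃ z' ∈ magnusSubgroup (level x 0 0), (z' = 1 → z = 1) ∧
      (of (proj (r' ^ n) z) : HNNExtension _ _ _ φ) * t ^ (u : ℤ) =
        t ^ (u : ℤ) * of (proj (r' ^ n) z') := by
  have hmap : (magnusSubgroup (level x 0 0)).map (shift : FreeGroup (X × ℤ) ≃* _).toMonoidHom =
      magnusSubgroup (level x 0 0) := by
    rw [map_shift_magnusSubgroup_level]
    exact congrArg magnusSubgroup (Set.ext fun d => forall_congr' fun _ => by omega)
  obtain rfl | rfl := Int.units_eq_one_or u
  · obtain ⟨z', hz', rfl⟩ := hmap.ge hz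
    refine ⟨z', hz', fun h => by rw [h, map_one], ?_⟩
    simpa using (hφ.t_mul_of (magnusSubgroup_mono level_zero_zero_subset hz')).symm
  · refine ⟨shift z, hmap.le (Subgroup.mem_map_of_mem _ hz),
      (map_eq_one_iff shift shift.injective).mp, ?_⟩
    rw [Units.val_neg, Units.val_one, zpow_neg_one, eq_inv_mul_iff_mul_eq, ← mul_assoc,
      mul_inv_eq_iff_eq_mul]
    exact hφ.t_mul_of (magnusSubgroup_mono level_zero_zero_subset hz)

lemma exists_eq_of_of_commute_of (hφ : IsShift φ) (hn : n ≠ 1)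
    (h₀ : StrongFreiheitssatz n r' (level x 0 m))
    (h₁ : StrongFreiheitssatz n r' (level x 1 (m + 1)))
    (hz : z ∈ magnusSubgroup (level x 0 0)) (hz1 : z ≠ 1) {g : HNNExtension _ _ _ φ}
    (hc : Commute (of (proj (r' ^ n) z)) g) (hg : height φ g = 1) : ∃ h, g = of h := by
  let V : Set (OneRelatorGroup (r' ^ n)) :=
    proj (r' ^ n) '' {z | z ∈ magnusSubgroup (level x 0 0) ∧ z ≠ 1}
  have shift_mem : ∀ v ∈ V, ∀ u : ℤˣ, ∃ v' ∈ V,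
      (of v : HNNExtension _ _ _ φ) * t ^ (u : ℤ) = t ^ (u : ℤ) * of v' := by
    rintro _ ⟨z, ⟨hz, hz1⟩, rfl⟩ u
    obtain ⟨z', hz', hz'1, h⟩ := hφ.exists_of_mul_t_zpow_eq hz u
    exact ⟨_, ⟨z', ⟨hz', mt hz'1 hz1⟩, rfl⟩, h⟩
  have malnormal : ∀ v ∈ V, ∀ (u : ℤˣ) h,
      h⁻¹ * v * h ∈ toSubgroup (levelSubgroup (proj (r' ^ n)) x 0 m)
        (levelSubgroup (proj (r' ^ n)) x 1 (m + 1)) u →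
      h ∈ toSubgroup (levelSubgroup (proj (r' ^ n)) x 0 m)
        (levelSubgroup (proj (r' ^ n)) x 1 (m + 1)) u := by
    rintro _ ⟨z, ⟨hz, hz1⟩, rfl⟩ u h hh
    have hz' {a b : ℤ} := magnusSubgroup_mono (level_zero_zero_subset (a := a) (b := b)) hz
    obtain rfl | rfl := Int.units_eq_one_or u
    · exact h₀.mem_map_of_conj_mem_map hn hz' hz1 hh
    · exact h₁.mem_map_of_conj_mem_map hn hz' hz1 hh
  exact exists_eq_of_of_mul_eq_mul_of shift_mem malnormal hg ⟨z, ⟨hz, hz1⟩, rfl⟩ hc.eq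

lemma eq_one_of_mem_toSubgroup (h₀ : StrongFreiheitssatz n r' (level x 0 m))
    (h₁ : StrongFreiheitssatz n r' (level x 1 (m + 1))) (u : ℤˣ) {k : OneRelatorGroup (r' ^ n)}
    (hk : k ∈ toSubgroup (levelSubgroup (proj (r' ^ n)) x 0 m)
      (levelSubgroup (proj (r' ^ n)) x 1 (m + 1)) u)
    (hk1 : ∀ a, k = proj (r' ^ n) a → proj r' a = 1) : k = 1 := by
  obtain rfl | rfl := Int.units_eq_one_or u
  · obtain ⟨a, ha, rfl⟩ := hk
    rw [h₀.free a ha (hk1 a rfl), map_one]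
  · obtain ⟨a, ha, rfl⟩ := hk
    rw [h₁.free a ha (hk1 a rfl), map_one]

theorem strongFreiheitssatz_of_isMagnusRewriting (hn : n ≠ 1)
    (h : IsMagnusRewriting c s x m r r') (h₀ : StrongFreiheitssatz n r' (level x 0 m))
    (h₁ : StrongFreiheitssatz n r' (level x 1 (m + 1))) : StrongFreiheitssatz n r {x}ᶜ := by
  obtain ⟨φ₁, hφ₁⟩ := exists_isShift h₀.free h₁.free
  obtain ⟨φ, hφ⟩ := exists_isShift
    (fun y hy hy1 => h₀.free y hy (proj_eq_one_of_proj_pow_eq_one (n := n) hy1))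
    (fun y hy hy1 => h₁.free y hy (proj_eq_one_of_proj_pow_eq_one hy1))
  refine ⟨fun y hy => free_of_isMagnusRewriting h hφ₁ h₀.free hy, fun g hg y hy hy1 hc => ?_⟩
  refine h.proj_eq_one_of_magnusSplitting hφ ?_
  have kernel {a} (ha : magnusSplitting c s φ g = of (proj (r' ^ n) a)) : proj r' a = 1 :=
    h.proj_eq_one_of_magnusSplitting_eq_of hφ hφ₁ hg ha
  have height_eq_one := h.height_magnusSplitting hφ hg
  obtain ⟨z, hz, e, hze, hone⟩ := hφ.exists_magnusSplitting_eq h.weight_ne_zero hy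
  have commute : Commute (of (proj (r' ^ n) z) * t ^ e) (magnusSplitting c s φ g) := by
    rw [← hze]
    exact hc.symm.map (descend (magnusSplitting c s φ)
      (h.magnusSplitting_eq_one hφ (proj_self _) (proj_self _)))
  by_cases he : e = 0
  · have hz1 : z ≠ 1 := fun hz1 => hy1 (hone hz1 he)
    rw [he, zpow_zero, mul_one] at commute
    obtain ⟨k, hk⟩ := exists_eq_of_of_commute_of hφ hn h₀ h₁ hz hz1 commute height_eq_one
    obtain ⟨a, rfl⟩ := PresentedGroup.mk_surjective _ k
    rw [hk] at commute
    rw [hk, h₀.cent a (kernel hk) z (magnusSubgroup_mono level_zero_zero_subset hz) hz1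
      (commute.of_map (of_injective φ)).symm, map_one]
  · obtain ⟨u, k, hk, hgk⟩ := exists_eq_of_of_commute_of_mul_t_zpow he commute height_eq_one
    rw [hgk, eq_one_of_mem_toSubgroup h₀ h₁ u hk fun a ha => kernel (hgk.trans (by rw [ha])),
      map_one]

end HierarchyStep

section ReducedRewriting

variable {X : Type*} {c : X → ℤ} {s : Option X} {L : List (X × Bool)}

lemma magnusRewrite_append (c : X → ℤ) (s : Option X) (i : ℤ) (L K : List (X × Bool)) :
    magnusRewrite c s i (L ++ K) =
      magnusRewrite c s i L ++ magnusRewrite c s (i + totalWeight c L) K := by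
  induction L generalizing i with
  | nil => simp
  | cons p L ih =>
    rw [List.cons_append, totalWeight_cons, ← add_assoc]
    by_cases hs : s = some p.1
    · rw [magnusRewrite_cons_of_eq hs, magnusRewrite_cons_of_eq hs, ih]
    · rw [magnusRewrite_cons_of_ne hs, magnusRewrite_cons_of_ne hs, ih, List.cons_append]

lemma totalWeight_mul_sub_mul (a b : ℤ) (f g : X → ℤ) (L : List (X × Bool)) :
    totalWeight (fun w => a * f w - b * g w) L = a * totalWeight f L - b * totalWeight g L := by
  induction L with
  | nil => simp
  | cons p L ih =>
    rw [totalWeight_cons, totalWeight_cons, totalWeight_cons, ih, weight, weight, weight]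
    split_ifs <;> ring

lemma label_add (c : X → ℤ) (i j : ℤ) (p : X × Bool) : label c (i + j) p = label c i p + j := by
  rw [label, label]
  split_ifs
  · rfl
  · exact add_sub_right_comm i j (c p.1)

lemma label_add_weight_not (c : X → ℤ) (i : ℤ) (p : X × Bool) :
    label c (i + weight c p) (p.1, !p.2) = label c i p := by
  obtain ⟨w, _ | _⟩ := p <;> simp [label, weight, sub_eq_add_neg]

lemma weight_ne_zero {p : X × Bool} (h : c p.1 ≠ 0) : weight c p ≠ 0 := by
  rw [weight]
  split_ifs
  exacts [h, neg_ne_zero.mpr h]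

lemma magnusRewrite_add (c : X → ℤ) (s : Option X) (i j : ℤ) (L : List (X × Bool)) :
    magnusRewrite c s (i + j) L =
      (magnusRewrite c s i L).map fun a => ((a.1.1, a.1.2 + j), a.2) := by
  induction L generalizing i with
  | nil => rfl
  | cons p L ih =>
    by_cases hs : s = some p.1
    · rw [magnusRewrite_cons_of_eq hs, magnusRewrite_cons_of_eq hs, add_right_comm, ih]
    · rw [magnusRewrite_cons_of_ne hs, magnusRewrite_cons_of_ne hs, add_right_comm, ih, label_add,
        List.map_cons]

lemma mem_magnusRewrite_iff {i : ℤ} {a : (X × ℤ) × Bool} :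
    a ∈ magnusRewrite c s i L ↔ a ∈ magnusRewrite c none i L ∧ s ≠ some a.1.1 := by
  induction L generalizing i with
  | nil => simp
  | cons p L ih =>
    rw [magnusRewrite_cons_of_ne (s := none) (by simp), List.mem_cons]
    by_cases hs : s = some p.1
    · rw [magnusRewrite_cons_of_eq hs, ih]
      aesop
    · rw [magnusRewrite_cons_of_ne hs, List.mem_cons, ih]
      aesop

lemma exists_mem_magnusRewrite (c : X → ℤ) (i : ℤ) {x : X} (hs : s ≠ some x)
    (hx : x ∈ L.map Prod.fst) : ∃ a ∈ magnusRewrite c s i L, a.1.1 = x := by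
  suffices ∃ a ∈ magnusRewrite c none i L, a.1.1 = x by
    obtain ⟨a, ha, rfl⟩ := this
    exact ⟨a, mem_magnusRewrite_iff.mpr ⟨ha, hs⟩, rfl⟩
  induction L generalizing i with
  | nil => simp at hx
  | cons p L ih =>
    rw [magnusRewrite_cons_of_ne (by simp)]
    obtain rfl | hx := List.mem_cons.mp hx
    · exact ⟨_, List.mem_cons_self, rfl⟩
    · obtain ⟨a, ha, rfl⟩ := ih (i + weight c p) hx
      exact ⟨a, List.mem_cons_of_mem _ ha, rfl⟩

lemma length_magnusRewrite_le (c : X → ℤ) (s : Option X) (i : ℤ) (L : List (X × Bool)) :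
    (magnusRewrite c s i L).length ≤ L.length := by
  induction L generalizing i with
  | nil => exact le_rfl
  | cons p L ih =>
    have := ih (i + weight c p)
    by_cases hs : s = some p.1
    · rw [magnusRewrite_cons_of_eq hs, List.length_cons]
      exact this.trans (Nat.le_succ _)
    · rw [magnusRewrite_cons_of_ne hs, List.length_cons, List.length_cons]
      exact Nat.succ_le_succ this

lemma length_magnusRewrite_lt (c : X → ℤ) (i : ℤ) {t : X} (ht : t ∈ L.map Prod.fst) :
    (magnusRewrite c (some t) i L).length < L.length := by
  obtain ⟨p, hp, rfl⟩ := List.mem_map.mp ht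
  obtain ⟨L₁, L₂, rfl⟩ := List.append_of_mem hp
  rw [magnusRewrite_append, magnusRewrite_cons_of_eq rfl, List.length_append, List.length_append,
    List.length_cons]
  exact Nat.add_lt_add_of_le_of_lt (length_magnusRewrite_le ..)
    (Nat.lt_succ_of_le (length_magnusRewrite_le ..))

lemma label_of_mem_head?_magnusRewrite (hL : FreeGroup.IsReduced L) {i : ℤ} {a : (X × ℤ) × Bool}
    (ha : a ∈ (magnusRewrite c s i L).head?) :
    ((a.1.1, a.2) ∈ L.head? ∧ a.1.2 = label c i (a.1.1, a.2)) ∨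
      ∃ p ∈ L.head?, s = some p.1 ∧
        ∃ k : ℕ, k ≠ 0 ∧ a.1.2 = label c i (a.1.1, a.2) + k * weight c p := by
  induction L generalizing i with
  | nil => simp at ha
  | cons p L ih =>
    obtain ⟨hp, hL⟩ := List.isChain_cons.mp hL
    by_cases hs : s = some p.1
    · rw [magnusRewrite_cons_of_eq hs] at ha
      refine Or.inr ⟨p, rfl, hs, ?_⟩
      obtain ⟨-, h⟩ | ⟨q, hq, hsq, k, -, h⟩ := ih hL ha
      · exact ⟨1, one_ne_zero, by rw [h, label_add, Nat.cast_one, one_mul]⟩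
      · -- The word begins with a power of the stable letter, whose weights all have one sign.
        have hpq : p.1 = q.1 := Option.some_injective X (hs.symm.trans hsq)
        obtain rfl : p = q := Prod.ext hpq (hp q hq hpq)
        refine ⟨k + 1, k.succ_ne_zero, ?_⟩
        rw [h, label_add]
        push_cast
        ring
    · rw [magnusRewrite_cons_of_ne hs] at ha
      obtain rfl : _ = a := by simpa using ha
      exact Or.inl ⟨rfl, rfl⟩

lemma isReduced_magnusRewrite (hs : ∀ w ∈ s, c w ≠ 0) (hL : FreeGroup.IsReduced L) (i : ℤ) :
    FreeGroup.IsReduced (magnusRewrite c s i L) := by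
  induction L generalizing i with
  | nil => exact List.isChain_nil
  | cons p L ih =>
    obtain ⟨hp, hL⟩ := List.isChain_cons.mp hL
    by_cases hsp : s = some p.1
    · rw [magnusRewrite_cons_of_eq hsp]
      exact ih hL _
    rw [magnusRewrite_cons_of_ne hsp]
    refine List.isChain_cons.mpr ⟨fun ⟨⟨w, j⟩, ε⟩ ha hpa => ?_, ih hL _⟩
    obtain ⟨rfl, hj⟩ : p.1 = w ∧ label c i p = j := Prod.ext_iff.mp hpa
    obtain ⟨h, -⟩ | ⟨q, -, hsq, k, hk, h⟩ := label_of_mem_head?_magnusRewrite hL ha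
    · exact hp _ h rfl
    · by_contra hε
      obtain rfl : ε = !p.2 := Bool.eq_not.mpr (Ne.symm hε)
      dsimp only at h
      rw [label_add_weight_not, ← hj, left_eq_add] at h
      exact mul_ne_zero (Nat.cast_ne_zero.mpr hk) (weight_ne_zero (hs q.1 hsq)) h

lemma isReduced_append_self_iff :
    FreeGroup.IsReduced (L ++ L) ↔ FreeGroup.IsCyclicallyReduced L := by
  simp only [FreeGroup.isCyclicallyReduced_iff, FreeGroup.IsReduced, List.isChain_append]
  tauto

lemma isCyclicallyReduced_magnusRewrite (hs : ∀ w ∈ s, c w ≠ 0)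
    (hL : FreeGroup.IsCyclicallyReduced L) (hc : totalWeight c L = 0) (i : ℤ) :
    FreeGroup.IsCyclicallyReduced (magnusRewrite c s i L) := by
  have := isReduced_magnusRewrite hs (isReduced_append_self_iff.mpr hL) i
  rwa [magnusRewrite_append, hc, add_zero, isReduced_append_self_iff] at this

lemma exists_magnusRewrite_bounds (c : X → ℤ) {x : X} (hs : s ≠ some x)
    (hx : x ∈ L.map Prod.fst) :
    ∃ i m : ℤ, (∀ a ∈ magnusRewrite c s i L, a.1.1 = x → 0 ≤ a.1.2 ∧ a.1.2 ≤ m) ∧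
      (x, 0) ∈ (magnusRewrite c s i L).map Prod.fst ∧
      (x, m) ∈ (magnusRewrite c s i L).map Prod.fst := by
  classical
  obtain ⟨a, ha, hax⟩ := exists_mem_magnusRewrite c 0 hs hx
  let K := (magnusRewrite c s 0 L).toFinset.filter (·.1.1 = x)
  have mem_K {a} : a ∈ K ↔ a ∈ magnusRewrite c s 0 L ∧ a.1.1 = x := by simp [K]
  have hK : K.Nonempty := ⟨a, mem_K.mpr ⟨ha, hax⟩⟩
  obtain ⟨lo, hlo, le_label⟩ := K.exists_min_image (·.1.2) hK
  obtain ⟨hi, hhi, label_le⟩ := K.exists_max_image (·.1.2) hK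
  have mem_map {a} (ha : a ∈ K) :
      (x, a.1.2 + -lo.1.2) ∈ (magnusRewrite c s (0 + -lo.1.2) L).map Prod.fst := by
    rw [magnusRewrite_add, List.map_map]
    obtain ⟨ha', rfl⟩ := mem_K.mp ha
    exact List.mem_map_of_mem (f := Prod.fst ∘ _) ha'
  refine ⟨0 + -lo.1.2, hi.1.2 + -lo.1.2, fun a ha hax => ?_, ?_, mem_map hhi⟩
  · rw [magnusRewrite_add] at ha
    obtain ⟨a, ha', rfl⟩ := List.mem_map.mp ha
    have := le_label a (mem_K.mpr ⟨ha', hax⟩)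
    have := label_le a (mem_K.mpr ⟨ha', hax⟩)
    dsimp only
    omega
  · simpa using mem_map hlo

end ReducedRewriting

section CyclicallyReducedNorm

variable {X : Type*} [DecidableEq X] {L : List (X × Bool)}

lemma norm_pow_le (a : FreeGroup X) (k : ℕ) : (a ^ k).norm ≤ k * a.norm := by
  induction k with
  | zero => simp
  | succ k ih =>
    rw [pow_succ, add_mul, one_mul]
    exact (FreeGroup.norm_mul_le _ _).trans (Nat.add_le_add_right ih _)

lemma norm_mk_pow (hL : FreeGroup.IsCyclicallyReduced L) (k : ℕ) :
    (FreeGroup.mk L ^ k).norm = k * L.length := by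
  rw [FreeGroup.pow_mk, FreeGroup.norm, FreeGroup.toWord_mk,
    (hL.flatten_replicate k).isReduced.reduce_eq]
  simp

lemma length_le_norm_of_conj (hL : FreeGroup.IsCyclicallyReduced L) {a b : FreeGroup X}
    (h : FreeGroup.mk L = a * b * a⁻¹) : L.length ≤ b.norm := by
  -- Otherwise the norm of a large power of `mk L = a * b * a⁻¹` would be too large.
  by_contra! hlt
  have norm_pow := norm_mk_pow hL (2 * a.norm + 1)
  rw [h, conj_pow] at norm_pow
  have conj_le := FreeGroup.norm_mul_le (a * b ^ (2 * a.norm + 1)) a⁻¹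
  have mul_le := FreeGroup.norm_mul_le a (b ^ (2 * a.norm + 1))
  have pow_le := norm_pow_le b (2 * a.norm + 1)
  rw [FreeGroup.norm_inv_eq] at conj_le
  nlinarith

lemma exists_label_ne (hL : FreeGroup.IsCyclicallyReduced L) {x : X} (hx : x ∈ L.map Prod.fst)
    (hc : totalWeight (Pi.single x 1) L = 0) (i j : ℤ) :
    ∃ a ∈ magnusRewrite (Pi.single x 1) (some x) i L, a.1.2 ≠ j := by
  by_contra! labels
  set K := magnusRewrite (Pi.single x 1) (some x) i L
  let τ := FreeGroup.of x
  have magnusHom_eq : magnusHom (Pi.single x 1) (some x) τ FreeGroup.of = MonoidHom.id _ := by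
    refine FreeGroup.ext_hom _ _ fun w => ?_
    by_cases hw : x = w
    · simp [magnusHom, hw, τ]
    · simp [magnusHom, hw, Ne.symm hw]
  have conjHom_eq : conjHom τ FreeGroup.of (FreeGroup.mk K) =
      MulAut.conj (τ ^ j) (FreeGroup.map Prod.fst (FreeGroup.mk K)) :=
    map_eq_map_of_mem_magnusSubgroup (S := {d : X × ℤ | d.2 = j})
      (g := (MulAut.conj (τ ^ j)).toMonoidHom.comp (FreeGroup.map Prod.fst))
      (fun ⟨w, _⟩ hd => by
        obtain rfl : _ = j := hd
        simp [-map_zpow]) (mk_mem_magnusSubgroup labels)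
  have conj : FreeGroup.mk L =
      τ ^ (j - i) * FreeGroup.map Prod.fst (FreeGroup.mk K) * (τ ^ (j - i))⁻¹ := by
    have := zpow_mul_magnusHom_mk (Pi.single x 1) (some x) τ FreeGroup.of i L
    rw [magnusHom_eq, conjHom_eq, hc, MonoidHom.id_apply, MulAut.conj_apply] at this
    rw [eq_inv_mul_of_mul_eq this]
    group
  have length_le := length_le_norm_of_conj hL conj
  have norm_le : (FreeGroup.map Prod.fst (FreeGroup.mk K)).norm ≤ K.length := by
    simpa using FreeGroup.norm_mk_le (L₁ := K.map fun a => (a.1.1, a.2))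
  exact (length_le.trans norm_le).not_gt (length_magnusRewrite_lt _ i hx)

end CyclicallyReducedNorm

section Induction

universe u

variable {X : Type u} {n : ℕ} {L : List (X × Bool)} {x t v : X}

/-- The strong Freiheitssatz for the letters of cyclically reduced words of length less than `N`. -/
def FreiheitssatzBelow (n N : ℕ) : Prop :=
  ∀ {D : Type u} {K : List (D × Bool)} {d : D}, K.length < N → FreeGroup.IsCyclicallyReduced K →
    d ∈ K.map Prod.fst → StrongFreiheitssatz n (FreeGroup.mk K) {d}ᶜ

lemma strongFreiheitssatz_of_magnusRewrite (hn : n ≠ 1) {c : X → ℤ} {s : Option X}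
    (hs : ∀ w ∈ s, c w ≠ 0) (hsx : s ≠ some x) (hc : totalWeight c L = 0)
    (hx : x ∈ L.map Prod.fst)
    (h : ∀ i j, (x, j) ∈ (magnusRewrite c s i L).map Prod.fst →
      StrongFreiheitssatz n (FreeGroup.mk (magnusRewrite c s i L)) {(x, j)}ᶜ) :
    StrongFreiheitssatz n (FreeGroup.mk L) {x}ᶜ := by
  obtain ⟨i, m, bounds, mem_zero, mem_max⟩ := exists_magnusRewrite_bounds c hsx hx
  have rewriting : IsMagnusRewriting c s x m (FreeGroup.mk L)
      (FreeGroup.mk (magnusRewrite c s i L)) :=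
    ⟨hs, ⟨i, L, hc, rfl, rfl⟩, mk_mem_magnusSubgroup fun a ha hax => by
      have := bounds a ha hax
      omega⟩
  refine strongFreiheitssatz_of_isMagnusRewriting hn rewriting
    ((h i m mem_max).mono ?_) ((h i 0 mem_zero).mono ?_)
  · rintro _ hd rfl
    exact (hd rfl).2.false
  · rintro _ hd rfl
    exact absurd (hd rfl).1 (by simp)

lemma strongFreiheitssatz_of_totalWeight_eq_zero (hn : n ≠ 1)
    (ih : FreiheitssatzBelow.{u} n L.length) (hL : FreeGroup.IsCyclicallyReduced L)
    (hx : x ∈ L.map Prod.fst) (ht : t ∈ L.map Prod.fst) (htx : t ≠ x) {c : X → ℤ} (hct : c t ≠ 0)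
    (hc : totalWeight c L = 0) : StrongFreiheitssatz n (FreeGroup.mk L) {x}ᶜ := by
  have hs : ∀ w ∈ some t, c w ≠ 0 := by simpa using hct
  exact strongFreiheitssatz_of_magnusRewrite hn hs (by simpa using htx) hc hx fun i j hj =>
    ih (length_magnusRewrite_lt c i ht) (isCyclicallyReduced_magnusRewrite hs hL hc i) hj

lemma strongFreiheitssatz_of_totalWeight_single_ne_zero [DecidableEq X] (hn : n ≠ 1)
    (ih : FreiheitssatzBelow.{u} n L.length) (hL : FreeGroup.IsCyclicallyReduced L)
    (hx : x ∈ L.map Prod.fst) (ht : t ∈ L.map Prod.fst) (htx : t ≠ x) (hvt : v ≠ t)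
    (hv : totalWeight (Pi.single v 1) L ≠ 0) : StrongFreiheitssatz n (FreeGroup.mk L) {x}ᶜ := by
  refine strongFreiheitssatz_of_totalWeight_eq_zero hn ih hL hx ht htx
    (c := fun w => totalWeight (Pi.single v 1) L * (Pi.single t 1 : X → ℤ) w -
      totalWeight (Pi.single t 1) L * (Pi.single v 1 : X → ℤ) w) ?_ ?_
  · simpa [hvt.symm] using hv
  · rw [totalWeight_mul_sub_mul, mul_comm, sub_self]

lemma strongFreiheitssatz_of_three_letters (hn : n ≠ 1)
    (ih : FreiheitssatzBelow.{u} n L.length) (hL : FreeGroup.IsCyclicallyReduced L)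
    (hx : x ∈ L.map Prod.fst) (ht : t ∈ L.map Prod.fst)
    (hv : v ∈ L.map Prod.fst) (htx : t ≠ x) (hvx : v ≠ x) (hvt : v ≠ t) :
    StrongFreiheitssatz n (FreeGroup.mk L) {x}ᶜ := by
  classical
  by_cases h : totalWeight (Pi.single v 1) L = 0
  · exact strongFreiheitssatz_of_totalWeight_eq_zero hn ih hL hx hv hvx (by simp) h
  · exact strongFreiheitssatz_of_totalWeight_single_ne_zero hn ih hL hx ht htx hvt h

lemma strongFreiheitssatz_of_totalWeight_single_eq_zero [DecidableEq X] (hn : n ≠ 1)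
    (ih : FreiheitssatzBelow.{u} n L.length) (hL : FreeGroup.IsCyclicallyReduced L)
    (hx : x ∈ L.map Prod.fst) (hc : totalWeight (Pi.single x 1) L = 0) :
    StrongFreiheitssatz n (FreeGroup.mk L) {x}ᶜ := by
  refine strongFreiheitssatz_of_magnusRewrite (s := none) hn (by simp) (by simp) hc hx
    fun i j hj => ?_
  obtain ⟨a, ha, -⟩ := exists_label_ne hL hx hc i 0
  obtain ⟨b, hb, hba⟩ := exists_label_ne hL hx hc i a.1.2
  rw [mem_magnusRewrite_iff] at ha hb
  refine strongFreiheitssatz_of_three_letters hn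
    (fun hK => ih (hK.trans_le (length_magnusRewrite_le ..)))
    (isCyclicallyReduced_magnusRewrite (by simp) hL hc i) hj (List.mem_map_of_mem ha.1)
    (List.mem_map_of_mem hb.1) ?_ ?_ ?_
  · exact fun h => ha.2 (by rw [h])
  · exact fun h => hb.2 (by rw [h])
  · exact fun h => hba (by rw [h])

theorem strongFreiheitssatz_of_mem (hn : n ≠ 1) (hL : FreeGroup.IsCyclicallyReduced L)
    (hx : x ∈ L.map Prod.fst) : StrongFreiheitssatz n (FreeGroup.mk L) {x}ᶜ := by
  classical
  induction h : L.length using Nat.strong_induction_on generalizing X with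
  | _ N ih =>
  subst h
  have below : FreiheitssatzBelow.{u} n L.length := fun hK hcyc hd => ih _ hK hcyc hd rfl
  by_cases hc : totalWeight (Pi.single x 1) L = 0
  · exact strongFreiheitssatz_of_totalWeight_single_eq_zero hn below hL hx hc
  by_cases hall : ∀ p ∈ L, p.1 = x
  · refine strongFreiheitssatz_of_mem_zpowers hn ?_
    rw [← magnusSubgroup_singleton]
    exact mk_mem_magnusSubgroup hall
  push Not at hall
  obtain ⟨p, hp, hpx⟩ := hall
  exact strongFreiheitssatz_of_totalWeight_single_ne_zero hn below hL hx (List.mem_map_of_mem hp)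
    hpx hpx.symm hc

end Induction

section Centralizer

variable {X : Type*} {n : ℕ} {r : FreeGroup X} {b : X} {g : FreeGroup X}

lemma StrongFreiheitssatz.mem_zpowers_of_commute (hr : StrongFreiheitssatz n r {b}) (hn : n ≠ 1)
    (h : Commute (proj (r ^ n) g) (proj (r ^ n) (FreeGroup.of b))) :
    proj (r ^ n) g ∈ Subgroup.zpowers (proj (r ^ n) (FreeGroup.of b)) := by
  have hb : FreeGroup.of b ∈ magnusSubgroup {b} := of_mem_magnusSubgroup (Set.mem_singleton b)
  rw [← MonoidHom.map_zpowers, ← magnusSubgroup_singleton]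
  exact hr.mem_map_of_semiconjBy hn hb (FreeGroup.of_ne_one b) hb h

lemma mem_zpowers_of_commute_of_isCyclicallyReduced (hn : n ≠ 1) {L : List (X × Bool)}
    (hL : FreeGroup.IsCyclicallyReduced L)
    (h : Commute (proj (FreeGroup.mk L ^ n) g) (proj (FreeGroup.mk L ^ n) (FreeGroup.of b))) :
    proj (FreeGroup.mk L ^ n) g ∈
      Subgroup.zpowers (proj (FreeGroup.mk L ^ n) (FreeGroup.of b)) := by
  by_cases hb : ∀ p ∈ L, p.1 = b
  · refine mem_zpowers_of_commute_of_mem_zpowers hn ?_ h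
    rw [← magnusSubgroup_singleton]
    exact mk_mem_magnusSubgroup hb
  · push Not at hb
    obtain ⟨p, hp, hpb⟩ := hb
    refine ((strongFreiheitssatz_of_mem hn hL (List.mem_map_of_mem hp)).mono
      ?_).mem_zpowers_of_commute hn h
    simpa using hpb

lemma exists_conj_mk_isCyclicallyReduced (r : FreeGroup X) :
    ∃ a, ∃ L : List (X × Bool), FreeGroup.IsCyclicallyReduced L ∧
      a * FreeGroup.mk L * a⁻¹ = r := by
  classical
  refine ⟨FreeGroup.mk (FreeGroup.reduceCyclically.conjugator r.toWord),
    FreeGroup.reduceCyclically r.toWord,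
    FreeGroup.reduceCyclically.isCyclicallyReduced FreeGroup.isReduced_toWord, ?_⟩
  rw [FreeGroup.inv_mk, FreeGroup.mul_mk, FreeGroup.mul_mk,
    FreeGroup.reduceCyclically.conj_conjugator_reduceCyclically, FreeGroup.mk_toWord]

theorem mem_zpowers_of_commute_proj_of (hn : n ≠ 1)
    (h : Commute (proj (r ^ n) g) (proj (r ^ n) (FreeGroup.of b))) :
    proj (r ^ n) g ∈ Subgroup.zpowers (proj (r ^ n) (FreeGroup.of b)) := by
  obtain ⟨a, L, hL, rfl⟩ := exists_conj_mk_isCyclicallyReduced r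
  rw [conj_pow] at h ⊢
  set r₀ := FreeGroup.mk L ^ n
  have proj_conj : proj r₀ (a * r₀ * a⁻¹) = 1 := by
    rw [map_mul, map_mul, proj_self, mul_one, map_inv, mul_inv_cancel]
  have proj_of_conj : proj (a * r₀ * a⁻¹) r₀ = 1 := by
    have := proj_self (a * r₀ * a⁻¹)
    rwa [map_mul, map_mul, map_inv, mul_inv_eq_one, mul_eq_left] at this
  obtain ⟨k, hk⟩ := mem_zpowers_of_commute_of_isCyclicallyReduced hn hL
    (h.map (descend (proj r₀) proj_conj))
  exact ⟨k, (map_zpow _ _ _).symm.trans (congrArg (descend (proj _) proj_of_conj) hk)⟩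

end Centralizer

end OneRelator

theorem statement_8_general {X : Type*} (R : FreeGroup X) {n : ℕ} (hn : n ≠ 1) (b : X) :
    Subgroup.centralizer {(PresentedGroup.of b : PresentedGroup ({R ^ n} : Set (FreeGroup X)))} =
      Subgroup.zpowers (PresentedGroup.of b : PresentedGroup ({R ^ n} : Set (FreeGroup X))) := by
  refine le_antisymm (fun g hg => ?_) ?_
  · obtain ⟨g, rfl⟩ := PresentedGroup.mk_surjective _ g
    exact OneRelator.mem_zpowers_of_commute_proj_of hn
      (Subgroup.mem_centralizer_singleton_iff.mp hg)
  · rw [Subgroup.zpowers_le, Subgroup.mem_centralizer_singleton_iff]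

theorem statement_8 (R : FreeGroup (Fin 2)) (n : ℕ) (hn : 1 < n) (hR : R ≠ 1)
    (hcyc : CyclicallyReduced R) (hσ : σ 0 R = 0) :
    Subgroup.centralizer
        {(PresentedGroup.of 1 : PresentedGroup ({R ^ n} : Set (FreeGroup (Fin 2))))} =
      Subgroup.zpowers
        (PresentedGroup.of 1 : PresentedGroup ({R ^ n} : Set (FreeGroup (Fin 2)))) :=
  statement_8_general R hn.ne' 1
end
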